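/- arXiv:1208.3161 — 2 statements merged into one kernel-verified Lean document; each statement's English description precedes it below -/
import Mathlib

section
/- Fix an integer c ≥ 2, and let T be the rank-one transformation constructed with r_n = 3, s_{n,0} = 0, s_{n,1} = 1, and s_{n,2} chosen so that h_{n+1} = 3^c h_n for every n (so that h_n = 3^{cn} and s_{n,2} ≥ 3h_n + 1). Then T is rationally weakly mixing: with F = I the unit interval, for all measurable A, B ⊆ I one has (1/a_n(I)) ∑_{k=0}^{n−1} |μ(A ∩ T^k B) − μ(A)μ(B) u_k(I)| → 0 as n → ∞. -/
open MeasureTheory Filter Set Pointwise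

/-- A rank-one cutting-and-stacking transformation of a subset `X ⊆ ℝ` (with Lebesgue
measure), given by columns `C n` consisting of `h n` levels (open intervals) of width `w n`,
with `pos n j` the left endpoint of the level of height `j` in column `C n`; column `C (n+1)`
is obtained from `C n` by cutting into `r n ≥ 2` subcolumns of equal width, adding `s n k`
spacers above the `k`-th subcolumn, and stacking. -/
structure RankOne where
  X : Set ℝ
  T : ℝ ≃ᵐ ℝ
  r : ℕ → ℕ
  s : ℕ → ℕ → ℕ
  h : ℕ → ℕ
  w : ℕ → ℝ
  pos : ℕ → ℕ → ℝ
  hr : ∀ n, 2 ≤ r n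
  h0 : h 0 = 1
  w0 : w 0 = 1
  pos0 : pos 0 0 = 0
  hrec : ∀ n, h (n + 1) = ∑ k ∈ Finset.range (r n), (h n + s n k)
  wrec : ∀ n, w (n + 1) = w n / (r n : ℝ)
  hX : X = ⋃ n, ⋃ j < h n, Set.Ioo (pos n j) (pos n j + w n)
  disj : ∀ n, ∀ j < h n, ∀ j' < h n, j ≠ j' →
    Disjoint (Set.Ioo (pos n j) (pos n j + w n)) (Set.Ioo (pos n j') (pos n j' + w n))
  stack : ∀ n, ∀ j < h n, ∀ k < r n,
    pos (n + 1) ((∑ i ∈ Finset.range k, (h n + s n i)) + j) = pos n j + (k : ℝ) * w (n + 1)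
  Tmap : ∀ n j, j + 1 < h n → ∀ x ∈ Set.Ioo (pos n j) (pos n j + w n),
    T x = x + (pos n (j + 1) - pos n j)
  Tbij : Set.BijOn (⇑T) X X
  Tpres : MeasurePreserving (⇑T) (volume.restrict X) (volume.restrict X)

namespace RankOne

/-- The level of height `j` in column `C n`. -/
def lvl (S : RankOne) (n j : ℕ) : Set ℝ := Set.Ioo (S.pos n j) (S.pos n j + S.w n)

/-- The measure on the space: Lebesgue measure restricted to `X`. -/
noncomputable def μ (S : RankOne) : Measure ℝ := volume.restrict S.X

/-- The intrinsic weight sequence `u n F = μ(F ∩ TⁿF) / μ(F)²`. -/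
noncomputable def u (S : RankOne) (F : Set ℝ) (n : ℕ) : ℝ :=
  (S.μ (F ∩ (⇑S.T)^[n] '' F)).toReal / (S.μ F).toReal ^ 2

/-- `a n F = ∑_{k<n} u k F`. -/
noncomputable def a (S : RankOne) (F : Set ℝ) (n : ℕ) : ℝ :=
  ∑ k ∈ Finset.range n, S.u F k

/-- `T` is normal if spacers are added above the rightmost subcolumn infinitely often. -/
def Normal (S : RankOne) : Prop := ∀ m, ∃ n, m ≤ n ∧ 0 < S.s n (S.r n - 1)

/-- `T` grows exponentially: `2 s_{n, r_n - 1} ≥ h_{n+1}` for every `n`. -/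
def ExpGrowing (S : RankOne) : Prop := ∀ n, S.h (n + 1) ≤ 2 * S.s n (S.r n - 1)

/-- `T` has a bounded number of cuts: `sup r_n < ∞`. -/
def BoundedCuts (S : RankOne) : Prop := ∃ c, ∀ n, S.r n ≤ c

/-- `H n = {0} ∪ {∑_{k≤i} (h n + s n k) : 0 ≤ i < r n - 1}`. -/
def Hset (S : RankOne) (n : ℕ) : Finset ℕ :=
  insert 0 ((Finset.range (S.r n - 1)).image fun i => ∑ k ∈ Finset.range (i + 1), (S.h n + S.s n k))

/-- The set of heights in column `C N` of the descendants of the level of height `p`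
in column `C j`: `D(J, N) = p + H j ⊕ H (j+1) ⊕ ⋯ ⊕ H (N-1)`. -/
def desc (S : RankOne) (j p : ℕ) : ℕ → Finset ℕ
  | 0 => {p}
  | N + 1 => if N < j then {p} else desc S j p N + S.Hset N

/-- `M m`: the maximal height of a descendant of the unit interval `I` in column `C m`. -/
def M (S : RankOne) (m : ℕ) : ℕ := (S.desc 0 0 m).sup id

/-- The ergodic sum `S_n(1_F)(x) = ∑_{k<n} 1_F(T^k x)`. -/
noncomputable def birkhoff (S : RankOne) (F : Set ℝ) (n : ℕ) (x : ℝ) : ℝ :=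
  ∑ k ∈ Finset.range n, Set.indicator F (fun _ => (1 : ℝ)) ((⇑S.T)^[k] x)

/-- `T` is rationally weakly mixing on `F`. -/
def RWMOn (S : RankOne) (F : Set ℝ) : Prop :=
  MeasurableSet F ∧ 0 < S.μ F ∧ S.μ F ≠ ⊤ ∧
  ∀ A B : Set ℝ, MeasurableSet A → A ⊆ F → MeasurableSet B → B ⊆ F →
    Tendsto (fun n => (S.a F n)⁻¹ *
      ∑ k ∈ Finset.range n,
        |(S.μ (A ∩ (⇑S.T)^[k] '' B)).toReal - (S.μ A).toReal * (S.μ B).toReal * S.u F k|)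
      atTop (nhds 0)

/-- `T` is rationally weakly mixing. -/
def RWM (S : RankOne) : Prop := ∃ F, S.RWMOn F

/-- `T` is rationally ergodic: some set `F` of positive finite measure satisfies a
Renyi inequality. -/
def RatErgodic (S : RankOne) : Prop :=
  ∃ (F : Set ℝ) (c : ℝ), MeasurableSet F ∧ 0 < S.μ F ∧ S.μ F ≠ ⊤ ∧
    ∀ n, ∫ x in F, (S.birkhoff F n x) ^ 2 ∂S.μ ≤ c * (∫ x in F, S.birkhoff F n x ∂S.μ) ^ 2

/-- `T` is spectrally weakly mixing: every bounded measurable eigenfunction is a.e. constant. -/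
def SpecWM (S : RankOne) : Prop :=
  ∀ (f : ℝ → ℂ) (z : ℂ), Measurable f → (∃ C, ∀ᵐ x ∂S.μ, ‖f x‖ ≤ C) →
    (∀ᵐ x ∂S.μ, f (S.T x) = z * f x) → ∃ c : ℂ, ∀ᵐ x ∂S.μ, f x = c

/-- `T` is zero-type: `μ(A ∩ TⁿA) → 0` for all `A` of finite measure. -/
def ZeroType (S : RankOne) : Prop :=
  ∀ A : Set ℝ, MeasurableSet A → S.μ A ≠ ⊤ →
    Tendsto (fun n => S.μ (A ∩ (⇑S.T)^[n] '' A)) atTop (nhds 0)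

/-- The `i`-th nonzero element of `H n` (for `i < r n - 1`): `e n i = ∑_{k ≤ i} (h n + s n k)`. -/
def e (S : RankOne) (n i : ℕ) : ℕ := ∑ k ∈ Finset.range (i + 1), (S.h n + S.s n k)

/-- `T` is steep: listing the nonzero elements of `H 0`, then `H 1`, etc., as `t 1, t 2, …`,
each successive element is at least `4` times the previous one. -/
def Steep (S : RankOne) : Prop :=
  (∀ n i, i + 2 < S.r n → 4 * S.e n i ≤ S.e n (i + 1)) ∧
  (∀ n, 4 * S.e n (S.r n - 2) ≤ S.e (n + 1) 0)

/-- `T` is almost steep. -/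
def AlmostSteep (S : RankOne) : Prop :=
  ∀ n, 3 ≤ S.r n ∧ S.s n 0 = 0 ∧ S.s n 1 = 1 ∧
    ∀ i, 2 ≤ i → i ≤ S.r n - 1 →
      4 * (∑ k ∈ Finset.range i, (S.h n + S.s n k)) ≤ ∑ k ∈ Finset.range (i + 1), (S.h n + S.s n k)

/-- `A` is a finite union of levels of `T`. -/
def FinUnionLevels (S : RankOne) (A : Set ℝ) : Prop :=
  ∃ q : Finset (ℕ × ℕ), (∀ v ∈ q, v.2 < S.h v.1) ∧ A = ⋃ v ∈ q, S.lvl v.1 v.2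

end RankOne

/-!
For times `k` with `k + M N < h N`, cutting the levels of column `j` down to column `N` shows that
`μ(L_a ∩ Tᵏ L_b)` is `w N` times the `k`-th coefficient of the Laurent polynomial
`T^(a - b) * ∏ P_i`, where `i` runs over `j ≤ i < N` and `P_i` is the generating polynomial of the
differences of `H i`. As `H i` contains `0`, some `x` and `2 * x + 1`, the normalized factor
`P_i / r_i²` is `α z (1 + T) / 2` plus a remainder, with `‖z‖ ≤ 1` and a remainder of norm at most
`1 - α` in the `ℓ¹` norm, for one `α > 0` as the number of cuts is bounded. Powers of `(1 + T) / 2`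
asymptotically annihilate `1 - T`, by the decay of the central binomial coefficients, hence so do
the normalized products: any two pairs of levels have the same correlations up to an `ℓ¹` error
that is `o(1 / w N)`. Exponential growth and bounded cuts make `1 / w N` comparable to `a_n(I)` at
the relevant times `n`, and arbitrary measurable sets are approximated by unions of levels, with an
error controlled because a set of measure `ε` contributes at most `ε / w N` to the sums of
correlations.
-/

theorem centralBinom_div_four_pow_sq_mul_le_one (q : ℕ) :
    ((Nat.centralBinom q : ℝ) / 4 ^ q) ^ 2 * (2 * q + 1) ≤ 1 := by
  induction q with
  | zero => simp
  | succ q ih =>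
    have hrec : (Nat.centralBinom (q + 1) : ℝ) =
        2 * (2 * q + 1) * Nat.centralBinom q / (q + 1) := by
      rw [eq_div_iff (by positivity), mul_comm]
      exact_mod_cast Nat.succ_mul_centralBinom_succ q
    have hstep : ((Nat.centralBinom (q + 1) : ℝ) / 4 ^ (q + 1)) ^ 2 * (2 * (q + 1 : ℕ) + 1) =
        ((Nat.centralBinom q : ℝ) / 4 ^ q) ^ 2 * (2 * q + 1) *
          ((2 * q + 1) * (2 * q + 3) / (2 * q + 2) ^ 2) := by
      rw [hrec]
      push_cast
      field_simp
      ring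
    rw [hstep]
    refine mul_le_one₀ ih (by positivity) ?_
    rw [div_le_one (by positivity)]
    nlinarith

theorem tendsto_centralBinom_div_four_pow :
    Tendsto (fun q : ℕ => (Nat.centralBinom q : ℝ) / 4 ^ q) atTop (nhds 0) := by
  have hsqrt : Tendsto (fun q : ℕ => Real.sqrt (1 / ((q : ℝ) + 1))) atTop (nhds 0) := by
    simpa using (tendsto_one_div_add_atTop_nhds_zero_nat (𝕜 := ℝ)).sqrt
  refine squeeze_zero (fun q => by positivity) (fun q => Real.le_sqrt_of_sq_le ?_) hsqrt
  rw [le_div_iff₀ (by positivity)]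
  refine le_trans ?_ (centralBinom_div_four_pow_sq_mul_le_one q)
  gcongr
  have : (0 : ℝ) ≤ q := q.cast_nonneg
  linarith

theorem sum_abs_choose_succ_sub_choose_lower (q : ℕ) :
    ∑ k ∈ Finset.range q, |((2 * q).choose (k + 1) : ℝ) - (2 * q).choose k| =
      Nat.centralBinom q - 1 := by
  have hmono : ∀ k ∈ Finset.range q, |((2 * q).choose (k + 1) : ℝ) - (2 * q).choose k| =
      (2 * q).choose (k + 1) - (2 * q).choose k := fun k hk => by
    refine abs_of_nonneg (sub_nonneg.2 (Nat.cast_le.2 ?_))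
    exact Nat.choose_le_succ_of_lt_half_left (by grind)
  rw [Finset.sum_congr rfl hmono, Finset.sum_range_sub (fun k => ((2 * q).choose k : ℝ))]
  simp [Nat.centralBinom]

theorem sum_abs_choose_succ_sub_choose (q : ℕ) :
    ∑ k ∈ Finset.range (2 * q), |((2 * q).choose (k + 1) : ℝ) - (2 * q).choose k| =
      2 * Nat.centralBinom q - 2 := by
  have hupper : ∑ k ∈ Finset.range q,
      |((2 * q).choose (q + k + 1) : ℝ) - (2 * q).choose (q + k)| = Nat.centralBinom q - 1 := by
    rw [← sum_abs_choose_succ_sub_choose_lower, ← Finset.sum_range_reflect]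
    refine Finset.sum_congr rfl fun k hk => ?_
    have hk := Finset.mem_range.1 hk
    rw [← Nat.choose_symm (n := 2 * q) (k := q + (q - 1 - k) + 1) (by omega),
      ← Nat.choose_symm (n := 2 * q) (k := q + (q - 1 - k)) (by omega), abs_sub_comm]
    congr 4 <;> omega
  conv_lhs => rw [two_mul q, Finset.sum_range_add, ← two_mul]
  rw [sum_abs_choose_succ_sub_choose_lower, hupper]
  ring

theorem one_sub_mul_one_add_pow {R : Type*} [Ring R] (u : R) (m : ℕ) :
    (1 - u) * (1 + u) ^ m =
      1 + ∑ k ∈ Finset.range m, ((m.choose (k + 1) : ℤ) - m.choose k) • u ^ (k + 1) -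
        u ^ (m + 1) := by
  have hpow : (1 + u) ^ m = ∑ k ∈ Finset.range (m + 1), (m.choose k : ℤ) • u ^ k := by
    rw [add_comm, (Commute.one_right u).add_pow]
    exact Finset.sum_congr rfl fun k _ => by simp [(Nat.cast_commute _ _).eq]
  rw [sub_mul, one_mul]
  nth_rw 1 [hpow, Finset.sum_range_succ']
  rw [hpow, Finset.mul_sum, Finset.sum_range_succ]
  simp only [mul_smul_comm, ← pow_succ', sub_smul, Finset.sum_sub_distrib, Nat.choose_self,
    Nat.choose_zero_right, Nat.cast_one, one_smul, pow_zero]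
  abel

section PowerBounded

variable {R : Type*} [NormedRing R] [NormedAlgebra ℝ R] {u : R}

theorem norm_one_sub_mul_half_one_add_pow_le (hu : ∀ k : ℕ, ‖u ^ k‖ ≤ 1) (q : ℕ) :
    ‖(1 - u) * ((1 / 2 : ℝ) • (1 + u)) ^ (2 * q)‖ ≤ 2 * (Nat.centralBinom q / 4 ^ q) := by
  have hexpand : ‖(1 - u) * (1 + u) ^ (2 * q)‖ ≤ 1 + (2 * Nat.centralBinom q - 2) + 1 := by
    rw [one_sub_mul_one_add_pow, ← sum_abs_choose_succ_sub_choose]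
    refine (norm_sub_le _ _).trans (add_le_add ((norm_add_le _ _).trans (add_le_add ?_ ?_)) (hu _))
    · simpa using hu 0
    · refine norm_sum_le_of_le _ fun k _ => ?_
      rw [← Int.cast_smul_eq_zsmul ℝ, norm_smul, Real.norm_eq_abs]
      push_cast
      exact mul_le_of_le_one_right (abs_nonneg _) (hu _)
  have hscale : ‖(1 / 2 : ℝ) ^ (2 * q)‖ = 1 / 4 ^ q := by
    rw [pow_mul, Real.norm_of_nonneg (by positivity), one_div_pow, one_div_pow]
    norm_num
  calc ‖(1 - u) * ((1 / 2 : ℝ) • (1 + u)) ^ (2 * q)‖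
      = 1 / 4 ^ q * ‖(1 - u) * (1 + u) ^ (2 * q)‖ := by
        rw [smul_pow, mul_smul_comm, norm_smul, hscale]
    _ ≤ 1 / 4 ^ q * (1 + (2 * Nat.centralBinom q - 2) + 1) := by gcongr
    _ = 2 * (Nat.centralBinom q / 4 ^ q) := by ring

theorem norm_half_one_add_le_one (hu : ∀ k : ℕ, ‖u ^ k‖ ≤ 1) : ‖(1 / 2 : ℝ) • (1 + u)‖ ≤ 1 := by
  have hone : ‖(1 : R)‖ ≤ 1 := by simpa using hu 0
  have hu1 : ‖u‖ ≤ 1 := by simpa using hu 1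
  rw [norm_smul, Real.norm_of_nonneg (by norm_num)]
  linarith [norm_add_le 1 u]

theorem tendsto_norm_one_sub_mul_half_one_add_pow (hu : ∀ k : ℕ, ‖u ^ k‖ ≤ 1) :
    Tendsto (fun m : ℕ => ‖(1 - u) * ((1 / 2 : ℝ) • (1 + u)) ^ m‖) atTop (nhds 0) := by
  have hanti : Antitone fun m : ℕ => ‖(1 - u) * ((1 / 2 : ℝ) • (1 + u)) ^ m‖ :=
    antitone_nat_of_succ_le fun m => by
      rw [pow_succ, ← mul_assoc]
      exact (norm_mul_le _ _).trans
        (mul_le_of_le_one_right (norm_nonneg _) (norm_half_one_add_le_one hu))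
  have hdouble : Tendsto (fun q : ℕ => 2 * q) atTop atTop :=
    tendsto_id.const_mul_atTop' two_pos
  rw [tendsto_iff_tendsto_subseq_of_antitone hanti hdouble]
  exact squeeze_zero (fun q => norm_nonneg _) (norm_one_sub_mul_half_one_add_pow_le hu)
    (by simpa using tendsto_centralBinom_div_four_pow.const_mul 2)

end PowerBounded

-- The limits of the rows `G m` increase with `m` and are bounded by `G m 0`, which tends to zero.
theorem tendsto_zero_of_le_convex_combination {α : ℝ} (hα : 0 < α) {G : ℕ → ℕ → ℝ}
    (hnonneg : ∀ m L, 0 ≤ G m L) (hanti : ∀ m, Antitone (G m))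
    (hstep : ∀ m L, G m (L + 1) ≤ α * G (m + 1) L + (1 - α) * G m L)
    (hinit : Tendsto (fun m => G m 0) atTop (nhds 0)) :
    Tendsto (G 0) atTop (nhds 0) := by
  have hbdd : ∀ m, BddBelow (range (G m)) := fun m => ⟨0, by rintro _ ⟨L, rfl⟩; exact hnonneg m L⟩
  have hlim : ∀ m, Tendsto (G m) atTop (nhds (⨅ L, G m L)) := fun m =>
    tendsto_atTop_ciInf (hanti m) (hbdd m)
  have hmono : Monotone fun m => ⨅ L, G m L := monotone_nat_of_le_succ fun m => by
    have hle := le_of_tendsto_of_tendsto' ((tendsto_add_atTop_iff_nat 1).2 (hlim m))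
      (((hlim (m + 1)).const_mul α).add ((hlim m).const_mul (1 - α))) (hstep m)
    have hαle : α * ⨅ L, G m L ≤ α * ⨅ L, G (m + 1) L := by linarith
    exact le_of_mul_le_mul_left hαle hα
  have hzero : ⨅ L, G 0 L = 0 := le_antisymm
    (ge_of_tendsto' hinit fun m => (hmono m.zero_le).trans (ciInf_le (hbdd m) 0))
    (le_ciInf (hnonneg 0))
  exact hzero ▸ hlim 0

theorem tendsto_norm_one_sub_mul_prod {R : Type*} [NormedCommRing R] [NormedAlgebra ℝ R] {u : R}
    (hu : ∀ k : ℕ, ‖u ^ k‖ ≤ 1) {α : ℝ} (hα : 0 < α) {q z r : ℕ → R}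
    (hq : ∀ i, q i = α • (z i * ((1 / 2 : ℝ) • (1 + u))) + r i)
    (hz : ∀ i, ‖z i‖ ≤ 1) (hr : ∀ i, ‖r i‖ ≤ 1 - α) :
    Tendsto (fun L => ‖(1 - u) * ∏ i ∈ Finset.range L, q i‖) atTop (nhds 0) := by
  set y : R := (1 / 2 : ℝ) • (1 + u)
  have hstep : ∀ (x : R) i, ‖x * q i‖ ≤ α * ‖x * y‖ + (1 - α) * ‖x‖ := fun x i => by
    calc ‖x * q i‖ = ‖α • (x * y * z i) + x * r i‖ := by
          rw [hq, mul_add, mul_smul_comm, mul_comm (z i), mul_assoc]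
      _ ≤ α * (‖x * y‖ * ‖z i‖) + ‖x‖ * ‖r i‖ := by
          refine (norm_add_le _ _).trans (add_le_add ?_ (norm_mul_le _ _))
          rw [norm_smul, Real.norm_of_nonneg hα.le]
          gcongr
          exact norm_mul_le _ _
      _ ≤ α * (‖x * y‖ * 1) + ‖x‖ * (1 - α) := by gcongr <;> simp only [hz, hr]
      _ = α * ‖x * y‖ + (1 - α) * ‖x‖ := by ring
  have hcontract : ∀ (x : R) i, ‖x * q i‖ ≤ ‖x‖ := fun x i => by
    have hxy : ‖x * y‖ ≤ ‖x‖ := (norm_mul_le _ _).trans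
      (mul_le_of_le_one_right (norm_nonneg _) (norm_half_one_add_le_one hu))
    nlinarith [hstep x i]
  have key := tendsto_zero_of_le_convex_combination hα
    (G := fun m L => ‖(1 - u) * y ^ m * ∏ i ∈ Finset.range L, q i‖) (fun _ _ => norm_nonneg _)
    (fun m => antitone_nat_of_succ_le fun L => by
      rw [Finset.prod_range_succ, ← mul_assoc]
      exact hcontract _ _)
    (fun m L => by
      rw [Finset.prod_range_succ, ← mul_assoc]
      convert hstep _ L using 3
      ring_nf)
    (by simpa only [Finset.range_zero, Finset.prod_empty, mul_one] using
      tendsto_norm_one_sub_mul_half_one_add_pow hu)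
  simpa using key

section L1Norm

variable {G : Type*}

/-- The sum of the absolute values of the coefficients of an element of a monoid algebra. -/
noncomputable def l1Norm (f : AddMonoidAlgebra ℝ G) : ℝ := f.coeff.sum fun _ c => |c|

theorem l1Norm_eq_sum {f : AddMonoidAlgebra ℝ G} {s : Finset G} (hs : f.coeff.support ⊆ s) :
    l1Norm f = ∑ g ∈ s, |f.coeff g| :=
  Finsupp.sum_of_support_subset _ hs _ fun _ _ => abs_zero

theorem sum_abs_coeff_le_l1Norm (f : AddMonoidAlgebra ℝ G) (s : Finset G) :
    ∑ g ∈ s, |f.coeff g| ≤ l1Norm f := by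
  classical
  rw [l1Norm_eq_sum (Finset.subset_union_right (s₁ := s))]
  exact Finset.sum_le_sum_of_subset_of_nonneg Finset.subset_union_left fun _ _ _ => abs_nonneg _

theorem l1Norm_single (g : G) (c : ℝ) : l1Norm (.single g c) = |c| := by
  simp [l1Norm]

theorem l1Norm_add_le (f g : AddMonoidAlgebra ℝ G) : l1Norm (f + g) ≤ l1Norm f + l1Norm g := by
  have hsum : l1Norm (f + g) ≤ ∑ x ∈ (f + g).coeff.support, (|f.coeff x| + |g.coeff x|) :=
    Finset.sum_le_sum fun x _ => abs_add_le _ _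
  rw [Finset.sum_add_distrib] at hsum
  exact hsum.trans (add_le_add (sum_abs_coeff_le_l1Norm _ _) (sum_abs_coeff_le_l1Norm _ _))

theorem l1Norm_smul (c : ℝ) (f : AddMonoidAlgebra ℝ G) : l1Norm (c • f) = |c| * l1Norm f := by
  have hsupp : (c • f).coeff.support ⊆ f.coeff.support := Finsupp.support_smul
  rw [l1Norm_eq_sum hsupp, l1Norm_eq_sum subset_rfl, Finset.mul_sum]
  simp [abs_mul]

theorem l1Norm_sum_le {ι : Type*} (s : Finset ι) (f : ι → AddMonoidAlgebra ℝ G) :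
    l1Norm (∑ i ∈ s, f i) ≤ ∑ i ∈ s, l1Norm (f i) :=
  Finset.le_sum_of_subadditive l1Norm (by simp [l1Norm]) l1Norm_add_le s f

theorem l1Norm_mul_le [AddMonoid G] (f g : AddMonoidAlgebra ℝ G) :
    l1Norm (f * g) ≤ l1Norm f * l1Norm g := by
  calc l1Norm (f * g)
      = l1Norm (∑ x ∈ f.coeff.support, ∑ y ∈ g.coeff.support,
          .single (x + y) (f.coeff x * g.coeff y)) := by rw [AddMonoidAlgebra.mul_def]; rfl
    _ ≤ ∑ x ∈ f.coeff.support, ∑ y ∈ g.coeff.support,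
          l1Norm (.single (x + y) (f.coeff x * g.coeff y)) :=
        (l1Norm_sum_le _ _).trans (Finset.sum_le_sum fun _ _ => l1Norm_sum_le _ _)
    _ = l1Norm f * l1Norm g := by
        simp only [l1Norm_single, abs_mul, ← Finset.mul_sum, ← Finset.sum_mul]
        rfl

theorem eq_zero_of_l1Norm_eq_zero {f : AddMonoidAlgebra ℝ G} (hf : l1Norm f = 0) : f = 0 := by
  ext g
  have hle := sum_abs_coeff_le_l1Norm f {g}
  rw [hf, Finset.sum_singleton] at hle
  simpa using abs_nonpos_iff.1 hle

/-- `l1Norm` as a ring norm on the real monoid algebra. -/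
noncomputable def l1RingNorm (G : Type*) [AddMonoid G] : RingNorm (AddMonoidAlgebra ℝ G) where
  toFun := l1Norm
  map_zero' := by simp [l1Norm]
  add_le' := l1Norm_add_le
  neg' f := by rw [← neg_one_smul ℝ f, l1Norm_smul, abs_neg, abs_one, one_mul]
  mul_le' := l1Norm_mul_le
  eq_zero_of_map_eq_zero' _ := eq_zero_of_l1Norm_eq_zero

noncomputable instance [AddCommMonoid G] : NormedCommRing (AddMonoidAlgebra ℝ G) where
  __ := (l1RingNorm G).toNormedRing
  mul_comm := mul_comm

theorem norm_eq_l1Norm [AddCommMonoid G] (f : AddMonoidAlgebra ℝ G) : ‖f‖ = l1Norm f := rfl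

noncomputable instance [AddCommMonoid G] : NormedAlgebra ℝ (AddMonoidAlgebra ℝ G) where
  norm_smul_le c f := (l1Norm_smul c f).le

end L1Norm

section Laurent

open LaurentPolynomial

theorem norm_T (n : ℤ) : ‖(T n : ℝ[T;T⁻¹])‖ = 1 := by
  rw [norm_eq_l1Norm, T, l1Norm_single, abs_one]

theorem norm_T_one_pow (k : ℕ) : ‖(T 1 : ℝ[T;T⁻¹]) ^ k‖ = 1 := by
  rw [T_pow, norm_T]

theorem norm_T_natCast_sub_one_mul_le (m : ℕ) (Q : ℝ[T;T⁻¹]) :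
    ‖(T m - 1) * Q‖ ≤ m * ‖(1 - T 1) * Q‖ := by
  have hgeom : (T m - 1 : ℝ[T;T⁻¹]) = -(∑ k ∈ Finset.range m, T 1 ^ k) * (1 - T 1) := by
    rw [neg_mul, geom_sum_mul_neg, T_pow, mul_one, neg_sub]
  have hsum : ‖-∑ k ∈ Finset.range m, (T 1 : ℝ[T;T⁻¹]) ^ k‖ ≤ m := by
    rw [norm_neg]
    simpa using norm_sum_le_of_le (Finset.range m) fun k _ => (norm_T_one_pow k).le
  rw [hgeom, mul_assoc]
  exact (norm_mul_le _ _).trans (mul_le_mul_of_nonneg_right hsum (norm_nonneg _))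

theorem norm_T_sub_T_mul_le (d d' : ℤ) (Q : ℝ[T;T⁻¹]) :
    ‖(T d - T d') * Q‖ ≤ |(d - d' : ℝ)| * ‖(1 - T 1) * Q‖ := by
  wlog hle : d' ≤ d generalizing d d'
  · rw [← neg_sub (T d'), neg_mul, norm_neg, abs_sub_comm]
    exact this d' d (by omega)
  obtain ⟨m, rfl⟩ := Int.le.dest hle
  have hfactor : (T (d' + m) - T d') * Q = T d' * ((T m - 1) * Q) := by
    rw [T_add]
    ring
  calc ‖(T (d' + m) - T d') * Q‖ ≤ ‖(T d' : ℝ[T;T⁻¹])‖ * ‖(T m - 1) * Q‖ :=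
        hfactor ▸ norm_mul_le _ _
    _ = ‖(T m - 1) * Q‖ := by rw [norm_T, one_mul]
    _ ≤ m * ‖(1 - T 1) * Q‖ := norm_T_natCast_sub_one_mul_le m Q
    _ = _ := by simp

theorem norm_sum_T_le {ι : Type*} (s : Finset ι) (d : ι → ℤ) :
    ‖∑ i ∈ s, (T (d i) : ℝ[T;T⁻¹])‖ ≤ s.card := by
  simpa using norm_sum_le_of_le s fun i _ => (norm_T (d i)).le

/-- The generating Laurent polynomial of the differences of a finite set of natural numbers:
its `k`-th coefficient counts the pairs `(x, y)` in `H × H` with `x - y = k`. -/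
noncomputable def differencePoly (H : Finset ℕ) : ℝ[T;T⁻¹] := ∑ p ∈ H ×ˢ H, T (p.1 - p.2 : ℤ)

theorem norm_half_T_add_T_le (d d' : ℤ) : ‖(1 / 2 : ℝ) • (T d + T d' : ℝ[T;T⁻¹])‖ ≤ 1 := by
  rw [norm_smul, Real.norm_of_nonneg (by norm_num)]
  linarith [norm_add_le (T d : ℝ[T;T⁻¹]) (T d'), norm_T d, norm_T d']

theorem half_T_add_T_mul_half_one_add_T (x : ℤ) :
    ((1 / 2 : ℝ) • (T x + T (-(x + 1))) * ((1 / 2 : ℝ) • (1 + T 1)) : ℝ[T;T⁻¹]) =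
      (1 / 4 : ℝ) • (T x + T (-x) + T (x + 1) + T (-(x + 1))) := by
  have hneg : (T (-(x + 1)) * T 1 : ℝ[T;T⁻¹]) = T (-x) := by
    rw [← T_add]
    congr 1
    ring
  rw [smul_mul_smul_comm, mul_add, mul_one, add_mul, hneg, ← T_add]
  module

-- The differences of `0, x, 2 * x + 1` include `x, x + 1` and `-(x + 1), -x`, two pairs of
-- consecutive integers, each contributing a multiple of `1 + T`.
theorem exists_norm_differencePoly_sub_le {H : Finset ℕ} {x : ℕ} (hx : 0 < x) (h0 : 0 ∈ H)
    (hxH : x ∈ H) (hxH' : x + (x + 1) ∈ H) :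
    ∃ z : ℝ[T;T⁻¹], ‖z‖ ≤ 1 ∧
      ‖differencePoly H - (4 : ℝ) • (z * ((1 / 2 : ℝ) • (1 + T 1)))‖ ≤ H.card ^ 2 - 4 := by
  refine ⟨_, norm_half_T_add_T_le x (-(x + 1)), ?_⟩
  let E : Finset (ℕ × ℕ) := {(x, 0), (0, x), (x + (x + 1), x), (x, x + (x + 1))}
  have hE : E ⊆ H ×ˢ H := by
    intro p hp
    simp only [E, Finset.mem_insert, Finset.mem_singleton] at hp
    rcases hp with rfl | rfl | rfl | rfl <;> simp [h0, hxH, hxH']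
  have hcard : E.card = 4 := by
    simp only [E]
    repeat rw [Finset.card_insert_of_notMem (by simp; try omega)]
    simp
  have hsum : ∑ p ∈ E, (T (p.1 - p.2 : ℤ) : ℝ[T;T⁻¹]) =
      T x + T (-x) + T (x + 1) + T (-(x + 1)) := by
    simp only [E]
    repeat rw [Finset.sum_insert (by simp; try omega)]
    rw [Finset.sum_singleton]
    push_cast
    ring_nf
  rw [half_T_add_T_mul_half_one_add_T, smul_smul, show (4 : ℝ) * (1 / 4) = 1 by norm_num, one_smul,
    ← hsum, differencePoly, ← Finset.sum_sdiff hE, add_sub_cancel_right]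
  refine (norm_sum_T_le _ _).trans_eq ?_
  rw [Finset.card_sdiff_of_subset hE, hcard, Finset.card_product, Nat.cast_sub]
  · push_cast
    ring
  · simpa [hcard] using Finset.card_le_card hE

theorem exists_differencePoly_decomposition {H : Finset ℕ} {x : ℕ} (hx : 0 < x) (h0 : 0 ∈ H)
    (hxH : x ∈ H) (hxH' : x + (x + 1) ∈ H) {α : ℝ} (hα : α ≤ 4 * ((H.card : ℝ) ^ 2)⁻¹) :
    ∃ z r : ℝ[T;T⁻¹], ‖z‖ ≤ 1 ∧ ‖r‖ ≤ 1 - α ∧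
      ((H.card : ℝ) ^ 2)⁻¹ • differencePoly H = α • (z * ((1 / 2 : ℝ) • (1 + T 1))) + r := by
  obtain ⟨z, hz, hrest⟩ := exists_norm_differencePoly_sub_le hx h0 hxH hxH'
  set y : ℝ[T;T⁻¹] := (1 / 2 : ℝ) • (1 + T 1)
  set c : ℝ := (H.card : ℝ) ^ 2
  have hzy : ‖z * y‖ ≤ 1 := (norm_mul_le _ _).trans <| mul_le_one₀ hz (norm_nonneg _)
    (norm_half_one_add_le_one fun k => (norm_T_one_pow k).le)
  have hc : 0 < c := by
    have : 0 < H.card := Finset.card_pos.2 ⟨0, h0⟩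
    positivity
  refine ⟨z, (4 * c⁻¹ - α) • (z * y) + c⁻¹ • (differencePoly H - (4 : ℝ) • (z * y)), hz, ?_,
    by module⟩
  calc _ ≤ (4 * c⁻¹ - α) * 1 + c⁻¹ * (c - 4) := by
        refine (norm_add_le _ _).trans (add_le_add ?_ ?_)
        · rw [norm_smul, Real.norm_of_nonneg (sub_nonneg.2 hα)]
          exact mul_le_mul_of_nonneg_left hzy (sub_nonneg.2 hα)
        · rw [norm_smul, Real.norm_of_nonneg (by positivity)]
          exact mul_le_mul_of_nonneg_left hrest (by positivity)
    _ = 1 - α := by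
        field_simp
        ring

theorem tendsto_norm_one_sub_T_mul_prod_differencePoly {H : ℕ → Finset ℕ} {R : ℕ}
    (hR : ∀ i, (H i).card ≤ R) (h0 : ∀ i, 0 ∈ H i)
    (hH : ∀ i, ∃ x > 0, x ∈ H i ∧ x + (x + 1) ∈ H i) :
    Tendsto (fun L => ‖(1 - T 1) *
      ∏ i ∈ Finset.range L, (((H i).card : ℝ) ^ 2)⁻¹ • differencePoly (H i)‖) atTop (nhds 0) := by
  have hpos : ∀ i, 0 < (H i).card := fun i => Finset.card_pos.2 ⟨0, h0 i⟩
  have hRpos : 0 < R := (hpos 0).trans_le (hR 0)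
  have hdecomp : ∀ i, ∃ z r : ℝ[T;T⁻¹], ‖z‖ ≤ 1 ∧ ‖r‖ ≤ 1 - 4 * ((R : ℝ) ^ 2)⁻¹ ∧
      (((H i).card : ℝ) ^ 2)⁻¹ • differencePoly (H i) =
        (4 * ((R : ℝ) ^ 2)⁻¹) • (z * ((1 / 2 : ℝ) • (1 + T 1))) + r := by
    intro i
    obtain ⟨x, hx, hxH, hxH'⟩ := hH i
    refine exists_differencePoly_decomposition hx (h0 i) hxH hxH' ?_
    have := hpos i
    gcongr
    exact hR i
  choose z r hz hr hq using hdecomp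
  exact tendsto_norm_one_sub_mul_prod (fun k => (norm_T_one_pow k).le) (by positivity) hq hz hr

end Laurent

theorem sum_measureReal_inter_le {α ι : Type*} [MeasurableSpace α] {ν : Measure α} {E : Set α}
    {s : Finset ι} {t : ι → Set α} (hE : ν E ≠ ⊤) (ht : ∀ i ∈ s, MeasurableSet (t i))
    (hdisj : (s : Set ι).PairwiseDisjoint t) : ∑ i ∈ s, ν.real (E ∩ t i) ≤ ν.real E := by
  have : IsFiniteMeasure (ν.restrict E) := isFiniteMeasure_restrict.2 hE
  calc ∑ i ∈ s, ν.real (E ∩ t i) = ∑ i ∈ s, (ν.restrict E).real (t i) :=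
        Finset.sum_congr rfl fun i hi => by rw [measureReal_restrict_apply (ht i hi), inter_comm]
    _ ≤ (ν.restrict E).real univ := sum_measureReal_le_measureReal_univ ht hdisj
    _ = ν.real E := by rw [measureReal_restrict_apply .univ, univ_inter]

namespace RankOne

section Combinatorics

variable (S : RankOne)

/-- The height in column `n + 1` of the bottom of the `k`-th copy of column `n`. -/
def offset (n k : ℕ) : ℕ := ∑ i ∈ Finset.range k, (S.h n + S.s n i)

theorem offset_succ (n k : ℕ) : S.offset n (k + 1) = S.offset n k + (S.h n + S.s n k) :=
  Finset.sum_range_succ _ _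

theorem h_succ (n : ℕ) : S.h (n + 1) = S.offset n (S.r n) := S.hrec n

theorem r_pos (n : ℕ) : 0 < S.r n := two_pos.trans_le (S.hr n)

theorem two_mul_h_le (n : ℕ) : 2 * S.h n ≤ S.h (n + 1) :=
  calc 2 * S.h n ≤ S.r n * S.h n := Nat.mul_le_mul_right _ (S.hr n)
    _ = ∑ _k ∈ Finset.range (S.r n), S.h n := by simp
    _ ≤ S.h (n + 1) := S.hrec n ▸ Finset.sum_le_sum fun k _ => Nat.le_add_right _ _

theorem h_pos (n : ℕ) : 0 < S.h n := by
  induction n with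
  | zero => simp [S.h0]
  | succ n ih => exact lt_of_lt_of_le (by omega) (S.two_mul_h_le n)

theorem strictMono_h : StrictMono S.h := strictMono_nat_of_lt_succ fun n => by
  have := S.h_pos n
  have := S.two_mul_h_le n
  omega

theorem strictMono_offset (n : ℕ) : StrictMono (S.offset n) :=
  strictMono_nat_of_lt_succ fun k => by
    have := S.h_pos n
    rw [offset_succ]
    omega

theorem mem_Hset {n x : ℕ} : x ∈ S.Hset n ↔ ∃ k < S.r n, S.offset n k = x := by
  rw [← Nat.sub_add_cancel (S.r_pos n), Nat.exists_lt_succ_left]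
  simp [Hset, offset, eq_comm]

theorem Hset_eq_image_offset (n : ℕ) : S.Hset n = (Finset.range (S.r n)).image (S.offset n) := by
  ext x
  simp [mem_Hset]

theorem card_Hset (n : ℕ) : (S.Hset n).card = S.r n := by
  rw [Hset_eq_image_offset, Finset.card_image_of_injective _ (S.strictMono_offset n).injective,
    Finset.card_range]

theorem zero_mem_Hset (n : ℕ) : 0 ∈ S.Hset n := Finset.mem_insert_self _ _

variable {S}

theorem add_lt_h_succ {n a x : ℕ} (ha : a < S.h n) (hx : x ∈ S.Hset n) : a + x < S.h (n + 1) := by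
  obtain ⟨k, hk, rfl⟩ := S.mem_Hset.1 hx
  calc a + S.offset n k < S.offset n (k + 1) := by rw [offset_succ]; omega
    _ ≤ S.h (n + 1) := S.h_succ n ▸ (S.strictMono_offset n).monotone hk

theorem exists_add_succ_mem_Hset {n : ℕ} (hr : 3 ≤ S.r n) (hs : S.s n 1 = S.s n 0 + 1) :
    ∃ x > 0, x ∈ S.Hset n ∧ x + (x + 1) ∈ S.Hset n := by
  refine ⟨S.offset n 1, ?_, S.mem_Hset.2 ⟨1, by omega, rfl⟩, S.mem_Hset.2 ⟨2, by omega, ?_⟩⟩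
  · exact S.strictMono_offset n one_pos
  · simp only [offset, Finset.sum_range_succ, Finset.sum_range_zero, hs]
    omega

variable (S)

theorem desc_succ (N : ℕ) : S.desc 0 0 (N + 1) = S.desc 0 0 N + S.Hset N := by
  simp [desc]

variable {S}

theorem lt_h_of_mem_desc {N a : ℕ} (ha : a ∈ S.desc 0 0 N) : a < S.h N := by
  induction N generalizing a with
  | zero =>
    rw [S.h0]
    simpa [desc] using ha
  | succ N ih =>
    rw [desc_succ] at ha
    obtain ⟨b, hb, x, hx, rfl⟩ := Finset.mem_add.1 ha
    exact add_lt_h_succ (ih hb) hx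

theorem le_M_of_mem_desc {N a : ℕ} (ha : a ∈ S.desc 0 0 N) : a ≤ S.M N :=
  Finset.le_sup (f := id) ha

theorem ExpGrowing.two_mul_M_le (hexp : S.ExpGrowing) (N : ℕ) : 2 * S.M N ≤ S.h N := by
  suffices h : ∀ a ∈ S.desc 0 0 N, a ≤ S.h N / 2 by
    have : S.M N ≤ S.h N / 2 := Finset.sup_le h
    omega
  intro a ha
  cases N with
  | zero => simp_all [desc]
  | succ N =>
    rw [desc_succ] at ha
    obtain ⟨b, hb, x, hx, rfl⟩ := Finset.mem_add.1 ha
    obtain ⟨k, hk, rfl⟩ := S.mem_Hset.1 hx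
    have hkr : S.offset N k ≤ S.offset N (S.r N - 1) :=
      (S.strictMono_offset N).monotone (by omega)
    have hlast : S.h (N + 1) = S.offset N (S.r N - 1) + (S.h N + S.s N (S.r N - 1)) := by
      rw [h_succ, ← offset_succ, Nat.sub_add_cancel (S.r_pos N)]
    have hb := lt_h_of_mem_desc hb
    have hspacers := hexp N
    omega

end Combinatorics

section Width

variable (S : RankOne)

theorem w_eq_r_mul_w_succ (n : ℕ) : S.w n = S.r n * S.w (n + 1) := by
  have : (S.r n : ℝ) ≠ 0 := by exact_mod_cast (S.r_pos n).ne'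
  rw [S.wrec]
  field_simp

theorem w_pos (n : ℕ) : 0 < S.w n := by
  induction n with
  | zero => simp [S.w0]
  | succ n ih => rw [S.wrec]; exact div_pos ih (by exact_mod_cast S.r_pos n)

theorem w_eq_prod_mul_w {j N : ℕ} (hjN : j ≤ N) :
    S.w j = (∏ i ∈ Finset.Ico j N, (S.r i : ℝ)) * S.w N := by
  induction N, hjN using Nat.le_induction with
  | base => simp
  | succ N hjN ih => rw [ih, Finset.prod_Ico_succ_top hjN, mul_assoc, ← w_eq_r_mul_w_succ]

theorem tendsto_w : Tendsto S.w atTop (nhds 0) := by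
  have hle : ∀ n, S.w n ≤ (1 / 2) ^ n := fun n => by
    induction n with
    | zero => simp [S.w0]
    | succ n ih =>
      have hr : (2 : ℝ) ≤ S.r n := by exact_mod_cast S.hr n
      have hw : S.w n = S.r n * S.w (n + 1) := S.w_eq_r_mul_w_succ n
      rw [pow_succ]
      nlinarith [S.w_pos (n + 1)]
  exact squeeze_zero (fun n => (S.w_pos n).le) hle
    (tendsto_pow_atTop_nhds_zero_of_lt_one (by norm_num) (by norm_num))

end Width

section Levels

variable {S : RankOne}

theorem measurableSet_lvl {n j : ℕ} : MeasurableSet (S.lvl n j) := measurableSet_Ioo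

theorem lvl_subset_X {n j : ℕ} (hj : j < S.h n) : S.lvl n j ⊆ S.X := by
  rw [S.hX]
  exact subset_iUnion_of_subset n (subset_iUnion₂_of_subset j hj subset_rfl)

theorem measure_lvl {n j : ℕ} (hj : j < S.h n) : S.μ (S.lvl n j) = ENNReal.ofReal (S.w n) := by
  rw [μ, Measure.restrict_eq_self _ (lvl_subset_X hj), lvl, Real.volume_Ioo, add_sub_cancel_left]

theorem measureReal_lvl {n j : ℕ} (hj : j < S.h n) : S.μ.real (S.lvl n j) = S.w n := by
  rw [measureReal_def, measure_lvl hj, ENNReal.toReal_ofReal (S.w_pos n).le]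

theorem disjoint_lvl {n j j' : ℕ} (hj : j < S.h n) (hj' : j' < S.h n) (hne : j ≠ j') :
    Disjoint (S.lvl n j) (S.lvl n j') :=
  S.disj n j hj j' hj' hne

theorem image_lvl {n j : ℕ} (hj : j + 1 < S.h n) : S.T '' S.lvl n j = S.lvl n (j + 1) := by
  rw [lvl, image_congr (S.Tmap n j hj), Set.image_add_const_Ioo, lvl]
  ring_nf

theorem image_iterate_lvl {n j k : ℕ} (hjk : j + k < S.h n) :
    S.T^[k] '' S.lvl n j = S.lvl n (j + k) := by
  induction k with
  | zero => simp
  | succ k ih =>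
    rw [Function.iterate_succ', image_comp, ih (by omega), image_lvl (by omega), add_assoc]

theorem lvl_succ_subset {n a x : ℕ} (ha : a < S.h n) (hx : x ∈ S.Hset n) :
    S.lvl (n + 1) (a + x) ⊆ S.lvl n a := by
  obtain ⟨k, hk, rfl⟩ := S.mem_Hset.1 hx
  have hk1 : ((k + 1 : ℕ) : ℝ) ≤ S.r n := by exact_mod_cast hk
  have hw := S.w_pos (n + 1)
  have hpos : S.pos (n + 1) (a + S.offset n k) = S.pos n a + k * S.w (n + 1) := by
    rw [add_comm a]
    exact S.stack n a ha k hk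
  rw [lvl, lvl, hpos, S.w_eq_r_mul_w_succ n]
  push_cast at hk1
  exact Ioo_subset_Ioo (le_add_of_nonneg_right (by positivity)) (by nlinarith)

variable (S)

/-- The union of the levels of column `N` whose heights lie in `P`. -/
def levelUnion (N : ℕ) (P : Finset ℕ) : Set ℝ := ⋃ a ∈ P, S.lvl N a

variable {S}

theorem measurableSet_levelUnion {N : ℕ} {P : Finset ℕ} : MeasurableSet (S.levelUnion N P) :=
  P.measurableSet_biUnion fun _ _ => measurableSet_lvl

theorem pairwiseDisjoint_lvl {N : ℕ} {P : Finset ℕ} (hP : ∀ a ∈ P, a < S.h N) :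
    (P : Set ℕ).PairwiseDisjoint (S.lvl N) :=
  fun _ ha _ hb hne => disjoint_lvl (hP _ ha) (hP _ hb) hne

theorem measure_levelUnion {N : ℕ} {P : Finset ℕ} (hP : ∀ a ∈ P, a < S.h N) :
    S.μ (S.levelUnion N P) = ENNReal.ofReal (P.card * S.w N) := by
  rw [levelUnion, measure_biUnion_finset (pairwiseDisjoint_lvl hP) fun _ _ => measurableSet_lvl,
    Finset.sum_congr rfl fun a ha => measure_lvl (hP a ha), Finset.sum_const, nsmul_eq_mul,
    ENNReal.ofReal_mul (by positivity), ENNReal.ofReal_natCast]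

theorem measureReal_levelUnion {N : ℕ} {P : Finset ℕ} (hP : ∀ a ∈ P, a < S.h N) :
    S.μ.real (S.levelUnion N P) = P.card * S.w N := by
  have := S.w_pos N
  rw [measureReal_def, measure_levelUnion hP, ENNReal.toReal_ofReal (by positivity)]

theorem lvl_ae_eq_levelUnion_succ {n a : ℕ} (ha : a < S.h n) :
    S.lvl n a =ᵐ[S.μ] S.levelUnion (n + 1) ((S.Hset n).image (a + ·)) := by
  have hlt : ∀ b ∈ (S.Hset n).image (a + ·), b < S.h (n + 1) := by
    simpa using fun x hx => add_lt_h_succ ha hx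
  refine (ae_eq_of_subset_of_measure_ge ?_ ?_ measurableSet_levelUnion.nullMeasurableSet ?_).symm
  · simpa [levelUnion] using fun x hx => lvl_succ_subset ha hx
  · rw [measure_lvl ha, measure_levelUnion hlt,
      Finset.card_image_of_injective _ (add_right_injective a), card_Hset, w_eq_r_mul_w_succ]
  · rw [measure_lvl ha]
    exact ENNReal.ofReal_ne_top

theorem levelUnion_ae_eq_succ {n : ℕ} {P : Finset ℕ} (hP : ∀ a ∈ P, a < S.h n) :
    S.levelUnion n P =ᵐ[S.μ] S.levelUnion (n + 1) (P + S.Hset n) := by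
  have hsplit : S.levelUnion (n + 1) (P + S.Hset n) =
      ⋃ a ∈ P, S.levelUnion (n + 1) ((S.Hset n).image (a + ·)) := by
    ext t
    simp [levelUnion, Finset.mem_add]
  rw [hsplit]
  exact P.eventuallyEq_iUnion fun a ha => lvl_ae_eq_levelUnion_succ (hP a ha)

variable (S)

theorem lvl_zero_ae_eq_levelUnion_desc (N : ℕ) :
    S.lvl 0 0 =ᵐ[S.μ] S.levelUnion N (S.desc 0 0 N) := by
  induction N with
  | zero =>
    rw [desc, levelUnion, Finset.set_biUnion_singleton]
    exact EventuallyEq.rfl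
  | succ N ih =>
    rw [desc_succ]
    exact ih.trans (levelUnion_ae_eq_succ fun _ => lt_h_of_mem_desc)

theorem measureReal_lvl_zero : S.μ.real (S.lvl 0 0) = 1 := by
  rw [measureReal_lvl (S.h_pos 0), S.w0]

theorem card_desc_mul_w (N : ℕ) : (S.desc 0 0 N).card * S.w N = 1 := by
  rw [← measureReal_levelUnion fun _ => lt_h_of_mem_desc,
    ← measureReal_congr (S.lvl_zero_ae_eq_levelUnion_desc N), measureReal_lvl_zero]

end Levels

section Correlation

open LaurentPolynomial

variable (S : RankOne)

/-- The correlation sequence `μ(E ∩ TᵏF)` of two sets. -/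
noncomputable def corr (E F : Set ℝ) (k : ℕ) : ℝ := S.μ.real (E ∩ S.T^[k] '' F)

/-- The difference `μ(A ∩ TᵏB) - μ(A) μ(B) u_k(I)` between a correlation sequence and its prediction
by the return sequence `u_k(I) = μ(I ∩ TᵏI)` of the unit interval `I`. -/
noncomputable def mixingDefect (A B : Set ℝ) (k : ℕ) : ℝ :=
  S.corr A B k - S.μ.real A * S.μ.real B * S.corr (S.lvl 0 0) (S.lvl 0 0) k

variable {S}

theorem corr_nonneg (E F : Set ℝ) (k : ℕ) : 0 ≤ S.corr E F k := measureReal_nonneg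

theorem image_iterate_eq_preimage (k : ℕ) (E : Set ℝ) : S.T^[k] '' E = S.T.symm^[k] ⁻¹' E :=
  congrFun (image_eq_preimage_of_inverse
    (Function.LeftInverse.iterate (g := S.T.symm) (f := S.T) S.T.symm_apply_apply k)
    (Function.RightInverse.iterate (g := S.T.symm) (f := S.T) S.T.apply_symm_apply k)) E

theorem measurePreserving_symm_iterate (k : ℕ) : MeasurePreserving S.T.symm^[k] S.μ S.μ :=
  (MeasurePreserving.symm S.T S.Tpres).iterate k

theorem measurableSet_image_iterate {E : Set ℝ} (hE : MeasurableSet E) (k : ℕ) :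
    MeasurableSet (S.T^[k] '' E) := by
  rw [image_iterate_eq_preimage]
  exact (measurePreserving_symm_iterate k).measurable hE

theorem corr_congr_ae {E E' F F' : Set ℝ} (hE : E =ᵐ[S.μ] E') (hF : F =ᵐ[S.μ] F') (k : ℕ) :
    S.corr E F k = S.corr E' F' k := by
  refine measureReal_congr (hE.inter ?_)
  rw [image_iterate_eq_preimage, image_iterate_eq_preimage]
  exact (measurePreserving_symm_iterate k).quasiMeasurePreserving.preimage_ae_eq hF

theorem corr_levelUnion {N : ℕ} {P Q : Finset ℕ} (hP : ∀ a ∈ P, a < S.h N)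
    (hQ : ∀ b ∈ Q, b < S.h N) (k : ℕ) :
    S.corr (S.levelUnion N P) (S.levelUnion N Q) k =
      ∑ a ∈ P, ∑ b ∈ Q, S.corr (S.lvl N a) (S.lvl N b) k := by
  have hunion : S.levelUnion N P ∩ S.T^[k] '' S.levelUnion N Q =
      ⋃ p ∈ P ×ˢ Q, S.lvl N p.1 ∩ S.T^[k] '' S.lvl N p.2 := by
    ext t
    simp only [levelUnion, image_iUnion, mem_inter_iff, mem_iUnion, Finset.mem_product,
      Prod.exists, exists_prop]
    exact ⟨fun ⟨⟨a, ha, hta⟩, b, hb, htb⟩ => ⟨a, b, ⟨ha, hb⟩, hta, htb⟩,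
      fun ⟨a, b, ⟨ha, hb⟩, hta, htb⟩ => ⟨⟨a, ha, hta⟩, b, hb, htb⟩⟩
  have hinj : Function.Injective S.T^[k] := S.T.injective.iterate k
  rw [corr, hunion, measureReal_biUnion_finset ?_ ?_ ?_, Finset.sum_product]
  · rfl
  · rintro ⟨a, b⟩ hab ⟨a', b'⟩ hab' hne
    simp only [Finset.coe_product, mem_prod, Finset.mem_coe] at hab hab'
    by_cases ha : a = a'
    · have hb : b ≠ b' := fun hb => hne (by rw [ha, hb])
      have hdisj := disjoint_lvl (hQ _ hab.2) (hQ _ hab'.2) hb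
      exact ((disjoint_image_iff hinj).2 hdisj).mono inter_subset_right inter_subset_right
    · exact (disjoint_lvl (hP _ hab.1) (hP _ hab'.1) ha).mono inter_subset_left inter_subset_left
  · exact fun p _ => measurableSet_lvl.inter (measurableSet_image_iterate measurableSet_lvl k)
  · refine fun p hp => measure_ne_top_of_subset inter_subset_left ?_
    rw [measure_lvl (hP _ (Finset.mem_product.1 hp).1)]
    exact ENNReal.ofReal_ne_top

theorem corr_lvl_eq_sum_Hset {n a b : ℕ} (ha : a < S.h n) (hb : b < S.h n) (k : ℕ) :
    S.corr (S.lvl n a) (S.lvl n b) k = ∑ x ∈ S.Hset n, ∑ y ∈ S.Hset n,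
      S.corr (S.lvl (n + 1) (a + x)) (S.lvl (n + 1) (b + y)) k := by
  have hlt : ∀ {c : ℕ}, c < S.h n → ∀ d ∈ (S.Hset n).image (c + ·), d < S.h (n + 1) := fun hc => by
    simpa using fun x hx => add_lt_h_succ hc hx
  rw [corr_congr_ae (lvl_ae_eq_levelUnion_succ ha) (lvl_ae_eq_levelUnion_succ hb),
    corr_levelUnion (hlt ha) (hlt hb), Finset.sum_image (add_right_injective a).injOn]
  exact Finset.sum_congr rfl fun x _ => Finset.sum_image (add_right_injective b).injOn

theorem corr_lvl_of_add_lt {N a b k : ℕ} (ha : a < S.h N) (hbk : b + k < S.h N) :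
    S.corr (S.lvl N a) (S.lvl N b) k = if a = b + k then S.w N else 0 := by
  rw [corr, image_iterate_lvl hbk]
  split_ifs with h
  · rw [h, inter_self, measureReal_lvl hbk]
  · rw [(disjoint_lvl ha hbk h).inter_eq, measureReal_empty]

theorem corr_lvl_eq_coeff {j N : ℕ} (hjN : j ≤ N) {a b k : ℕ} (ha : a < S.h j)
    (hb : b ∈ S.desc 0 0 j) (hk : k + S.M N < S.h N) :
    S.corr (S.lvl j a) (S.lvl j b) k =
      S.w N * (LaurentPolynomial.T (a - b : ℤ) *
        ∏ i ∈ Finset.Ico j N, differencePoly (S.Hset i)).coeff (k : ℤ) := by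
  induction hjN using Nat.decreasingInduction generalizing a b with
  | self =>
    have hbk := le_M_of_mem_desc hb
    rw [corr_lvl_of_add_lt ha (by omega), Finset.Ico_self, Finset.prod_empty, mul_one, T_apply,
      mul_ite, mul_one, mul_zero]
    congr 1
    exact propext ⟨fun h => by omega, fun h => by omega⟩
  | of_succ i hi ih =>
    have hsum : (LaurentPolynomial.T (a - b : ℤ) : ℝ[T;T⁻¹]) * differencePoly (S.Hset i) =
        ∑ x ∈ S.Hset i, ∑ y ∈ S.Hset i, LaurentPolynomial.T ((a + x : ℕ) - (b + y : ℕ) : ℤ) := by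
      rw [differencePoly, Finset.sum_product, Finset.mul_sum]
      refine Finset.sum_congr rfl fun x _ => ?_
      rw [Finset.mul_sum]
      refine Finset.sum_congr rfl fun y _ => ?_
      rw [← T_add]
      push_cast
      ring_nf
    rw [Finset.prod_eq_prod_Ico_succ_bot hi, ← mul_assoc, hsum, Finset.sum_mul,
      AddMonoidAlgebra.coeff_sum, Finsupp.finsetSum_apply, Finset.mul_sum,
      corr_lvl_eq_sum_Hset ha (lt_h_of_mem_desc hb)]
    refine Finset.sum_congr rfl fun x hx => ?_
    rw [Finset.sum_mul, AddMonoidAlgebra.coeff_sum, Finsupp.finsetSum_apply, Finset.mul_sum]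
    refine Finset.sum_congr rfl fun y hy => ih (add_lt_h_succ ha hx) ?_
    exact S.desc_succ i ▸ Finset.add_mem_add hb hy

end Correlation

section ColumnNegligible

variable (S : RankOne)

/-- A sequence is column negligible if its `ℓ¹` mass up to time `n` is `o(1 / w N)`, uniformly over
the times `n` for which column `N` describes the returns of the unit interval to itself. -/
def ColumnNegligible (f : ℕ → ℝ) : Prop :=
  ∀ ε > 0, ∀ᶠ N in atTop, ∀ n, n + S.M N ≤ S.h N → ∑ k ∈ Finset.range n, |f k| ≤ ε * (S.w N)⁻¹

variable {S} {f g : ℕ → ℝ}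

theorem ColumnNegligible.add (hf : S.ColumnNegligible f) (hg : S.ColumnNegligible g) :
    S.ColumnNegligible fun k => f k + g k := by
  intro ε hε
  filter_upwards [hf (ε / 2) (half_pos hε), hg (ε / 2) (half_pos hε)] with N hfN hgN n hn
  calc ∑ k ∈ Finset.range n, |f k + g k|
      ≤ ∑ k ∈ Finset.range n, (|f k| + |g k|) := Finset.sum_le_sum fun k _ => abs_add_le _ _
    _ ≤ ε / 2 * (S.w N)⁻¹ + ε / 2 * (S.w N)⁻¹ := by
      rw [Finset.sum_add_distrib]
      exact add_le_add (hfN n hn) (hgN n hn)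
    _ = ε * (S.w N)⁻¹ := by ring

theorem columnNegligible_zero : S.ColumnNegligible fun _ => 0 := by
  intro ε hε
  refine .of_forall fun N n _ => ?_
  have := S.w_pos N
  simp only [abs_zero, Finset.sum_const_zero]
  positivity

theorem ColumnNegligible.sum {ι : Type*} {s : Finset ι} {f : ι → ℕ → ℝ}
    (hf : ∀ i ∈ s, S.ColumnNegligible (f i)) : S.ColumnNegligible fun k => ∑ i ∈ s, f i k := by
  classical
  induction s using Finset.induction_on with
  | empty => simpa using columnNegligible_zero
  | insert i s hi ih =>
    simp only [Finset.sum_insert hi]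
    exact (hf i (Finset.mem_insert_self i s)).add
      (ih fun l hl => hf l (Finset.mem_insert_of_mem hl))

theorem columnNegligible_of_le_mul {δ : ℕ → ℝ} (hδ : Tendsto δ atTop (nhds 0))
    (hf : ∀ᶠ N in atTop, ∀ n, n + S.M N ≤ S.h N →
      ∑ k ∈ Finset.range n, |f k| ≤ δ N * (S.w N)⁻¹) : S.ColumnNegligible f := by
  intro ε hε
  filter_upwards [hf, hδ.eventually_le_const hε] with N hfN hδN n hn
  exact (hfN n hn).trans (mul_le_mul_of_nonneg_right hδN (inv_nonneg.2 (S.w_pos N).le))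

theorem ColumnNegligible.const_mul (hf : S.ColumnNegligible f) (c : ℝ) :
    S.ColumnNegligible fun k => c * f k := by
  intro ε hε
  filter_upwards [hf (ε / (|c| + 1)) (by positivity)] with N hfN n hn
  have hw := S.w_pos N
  calc ∑ k ∈ Finset.range n, |c * f k|
      = |c| * ∑ k ∈ Finset.range n, |f k| := by simp only [abs_mul, Finset.mul_sum]
    _ ≤ (|c| + 1) * (ε / (|c| + 1) * (S.w N)⁻¹) :=
      mul_le_mul (le_add_of_nonneg_right zero_le_one) (hfN n hn) (by positivity) (by positivity)
    _ = ε * (S.w N)⁻¹ := by field_simp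

theorem columnNegligible_of_forall_approx
    (h : ∀ ε > 0, ∃ g, S.ColumnNegligible g ∧ ∀ N n, n + S.M N ≤ S.h N →
      ∑ k ∈ Finset.range n, |f k - g k| ≤ ε * (S.w N)⁻¹) : S.ColumnNegligible f := by
  intro ε hε
  obtain ⟨g, hg, hfg⟩ := h (ε / 2) (half_pos hε)
  filter_upwards [hg (ε / 2) (half_pos hε)] with N hgN n hn
  calc ∑ k ∈ Finset.range n, |f k|
      ≤ ∑ k ∈ Finset.range n, (|f k - g k| + |g k|) :=
        Finset.sum_le_sum fun k _ => by simpa using abs_add_le (f k - g k) (g k)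
    _ ≤ ε / 2 * (S.w N)⁻¹ + ε / 2 * (S.w N)⁻¹ := by
      rw [Finset.sum_add_distrib]
      exact add_le_add (hfg N n hn) (hgN n hn)
    _ = ε * (S.w N)⁻¹ := by ring

end ColumnNegligible

section LevelCorrelation

open LaurentPolynomial

variable {S : RankOne}

theorem sum_abs_corr_lvl_sub_le {j N a b a' b' n : ℕ} (hjN : j ≤ N) (ha : a < S.h j)
    (hb : b ∈ S.desc 0 0 j) (ha' : a' < S.h j) (hb' : b' ∈ S.desc 0 0 j)
    (hn : n + S.M N ≤ S.h N) :
    ∑ k ∈ Finset.range n, |S.corr (S.lvl j a) (S.lvl j b) k - S.corr (S.lvl j a') (S.lvl j b') k| ≤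
      S.w N * ‖(LaurentPolynomial.T (a - b : ℤ) - LaurentPolynomial.T (a' - b' : ℤ)) *
        ∏ i ∈ Finset.Ico j N, differencePoly (S.Hset i)‖ := by
  set F : ℝ[T;T⁻¹] := (LaurentPolynomial.T (a - b : ℤ) - LaurentPolynomial.T (a' - b' : ℤ)) *
    ∏ i ∈ Finset.Ico j N, differencePoly (S.Hset i) with hF
  have hcoeff : ∀ k ∈ Finset.range n,
      |S.corr (S.lvl j a) (S.lvl j b) k - S.corr (S.lvl j a') (S.lvl j b') k| =
        S.w N * |F.coeff (k : ℤ)| := fun k hk => by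
    have hkN : k + S.M N < S.h N := by
      have := Finset.mem_range.1 hk
      omega
    rw [corr_lvl_eq_coeff hjN ha hb hkN, corr_lvl_eq_coeff hjN ha' hb' hkN, ← mul_sub, abs_mul,
      abs_of_pos (S.w_pos N), hF, sub_mul, AddMonoidAlgebra.coeff_sub, Finsupp.sub_apply]
  rw [Finset.sum_congr rfl hcoeff, ← Finset.mul_sum, norm_eq_l1Norm]
  refine mul_le_mul_of_nonneg_left ?_ (S.w_pos N).le
  simpa using sum_abs_coeff_le_l1Norm F ((Finset.range n).map Nat.castEmbedding)

theorem prod_differencePoly_eq_smul {j N : ℕ} (hjN : j ≤ N) :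
    ∏ i ∈ Finset.Ico j N, differencePoly (S.Hset i) = ((S.w j / S.w N) ^ 2) •
      ∏ i ∈ Finset.range (N - j),
        (((S.Hset (j + i)).card : ℝ) ^ 2)⁻¹ • differencePoly (S.Hset (j + i)) := by
  have hr : ∏ i ∈ Finset.range (N - j), (S.r (j + i) : ℝ) = S.w j / S.w N := by
    rw [← Finset.prod_Ico_eq_prod_range (fun i => (S.r i : ℝ)), S.w_eq_prod_mul_w hjN,
      mul_div_cancel_right₀ _ (S.w_pos N).ne']
  have hne : S.w j / S.w N ≠ 0 := (div_pos (S.w_pos j) (S.w_pos N)).ne'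
  rw [Finset.prod_smul, Finset.prod_inv_distrib, Finset.prod_pow]
  simp only [card_Hset]
  rw [hr, smul_inv_smul₀ (pow_ne_zero 2 hne), Finset.prod_Ico_eq_prod_range]

theorem columnNegligible_corr_lvl_sub (hr : ∀ n, 3 ≤ S.r n) (hs : ∀ n, S.s n 1 = S.s n 0 + 1)
    (hcuts : S.BoundedCuts) {j a b a' b' : ℕ} (ha : a < S.h j) (hb : b ∈ S.desc 0 0 j)
    (ha' : a' < S.h j) (hb' : b' ∈ S.desc 0 0 j) :
    S.ColumnNegligible fun k =>
      S.corr (S.lvl j a) (S.lvl j b) k - S.corr (S.lvl j a') (S.lvl j b') k := by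
  obtain ⟨R, hR⟩ := hcuts
  set d : ℤ := a - b
  set d' : ℤ := a' - b'
  set Q : ℕ → ℝ[T;T⁻¹] := fun L => ∏ i ∈ Finset.range L,
    (((S.Hset (j + i)).card : ℝ) ^ 2)⁻¹ • differencePoly (S.Hset (j + i))
  have hQ : Tendsto (fun L => ‖(1 - LaurentPolynomial.T 1) * Q L‖) atTop (nhds 0) :=
    tendsto_norm_one_sub_T_mul_prod_differencePoly (fun i => (S.card_Hset _).trans_le (hR _))
      (fun i => S.zero_mem_Hset _) fun i => exists_add_succ_mem_Hset (hr _) (hs _)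
  have hδ := (hQ.comp (tendsto_sub_atTop_nat j)).const_mul (S.w j ^ 2 * |(d - d' : ℝ)|)
  rw [mul_zero] at hδ
  refine columnNegligible_of_le_mul hδ ((eventually_ge_atTop j).mono fun N hjN n hn => ?_)
  have hwj := S.w_pos j
  have hwN := S.w_pos N
  refine (sum_abs_corr_lvl_sub_le hjN ha hb ha' hb' hn).trans ?_
  calc S.w N * ‖(LaurentPolynomial.T d - LaurentPolynomial.T d') *
        ∏ i ∈ Finset.Ico j N, differencePoly (S.Hset i)‖
      = S.w N * ((S.w j / S.w N) ^ 2 *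
          ‖(LaurentPolynomial.T d - LaurentPolynomial.T d') * Q (N - j)‖) := by
        rw [prod_differencePoly_eq_smul hjN, mul_smul_comm, norm_smul, Real.norm_of_nonneg]
        positivity
    _ ≤ S.w N * ((S.w j / S.w N) ^ 2 *
          (|(d - d' : ℝ)| * ‖(1 - LaurentPolynomial.T 1) * Q (N - j)‖)) := by
        gcongr
        exact norm_T_sub_T_mul_le d d' _
    _ = S.w j ^ 2 * |(d - d' : ℝ)| * ‖(1 - LaurentPolynomial.T 1) * Q (N - j)‖ * (S.w N)⁻¹ := by
        field_simp

end LevelCorrelation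

section LevelUnionCorrelation

variable {S : RankOne}

theorem corr_lvl_zero (j k : ℕ) :
    S.corr (S.lvl 0 0) (S.lvl 0 0) k =
      ∑ a ∈ S.desc 0 0 j, ∑ b ∈ S.desc 0 0 j, S.corr (S.lvl j a) (S.lvl j b) k := by
  have hI := S.lvl_zero_ae_eq_levelUnion_desc j
  rw [corr_congr_ae hI hI,
    corr_levelUnion (fun _ => lt_h_of_mem_desc) fun _ => lt_h_of_mem_desc]

theorem columnNegligible_corr_lvl (hr : ∀ n, 3 ≤ S.r n) (hs : ∀ n, S.s n 1 = S.s n 0 + 1)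
    (hcuts : S.BoundedCuts) {j a b : ℕ} (ha : a < S.h j) (hb : b ∈ S.desc 0 0 j) :
    S.ColumnNegligible fun k => S.corr (S.lvl j a) (S.lvl j b) k -
      S.w j ^ 2 * S.corr (S.lvl 0 0) (S.lvl 0 0) k := by
  have haverage : ∀ k, S.corr (S.lvl j a) (S.lvl j b) k -
      S.w j ^ 2 * S.corr (S.lvl 0 0) (S.lvl 0 0) k = S.w j ^ 2 *
        ∑ a' ∈ S.desc 0 0 j, ∑ b' ∈ S.desc 0 0 j,
          (S.corr (S.lvl j a) (S.lvl j b) k - S.corr (S.lvl j a') (S.lvl j b') k) := fun k => by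
    simp only [corr_lvl_zero j, Finset.sum_sub_distrib, Finset.sum_const, nsmul_eq_mul]
    linear_combination (-S.corr (S.lvl j a) (S.lvl j b) k *
      (1 + (S.desc 0 0 j).card * S.w j)) * S.card_desc_mul_w j
  simp only [haverage]
  refine .const_mul (.sum fun a' ha' => .sum fun b' hb' => ?_) _
  exact columnNegligible_corr_lvl_sub hr hs hcuts ha hb (lt_h_of_mem_desc ha') hb'

theorem columnNegligible_mixingDefect_levelUnion (hr : ∀ n, 3 ≤ S.r n)
    (hs : ∀ n, S.s n 1 = S.s n 0 + 1) (hcuts : S.BoundedCuts) {j : ℕ} {P Q : Finset ℕ}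
    (hP : P ⊆ S.desc 0 0 j) (hQ : Q ⊆ S.desc 0 0 j) :
    S.ColumnNegligible (S.mixingDefect (S.levelUnion j P) (S.levelUnion j Q)) := by
  have hPh : ∀ a ∈ P, a < S.h j := fun a ha => lt_h_of_mem_desc (hP ha)
  have hQh : ∀ b ∈ Q, b < S.h j := fun b hb => lt_h_of_mem_desc (hQ hb)
  have hsplit : S.mixingDefect (S.levelUnion j P) (S.levelUnion j Q) = fun k =>
      ∑ a ∈ P, ∑ b ∈ Q, (S.corr (S.lvl j a) (S.lvl j b) k -
        S.w j ^ 2 * S.corr (S.lvl 0 0) (S.lvl 0 0) k) := by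
    ext k
    simp only [mixingDefect, corr_levelUnion hPh hQh, measureReal_levelUnion hPh,
      measureReal_levelUnion hQh, Finset.sum_sub_distrib, Finset.sum_const, nsmul_eq_mul]
    ring
  rw [hsplit]
  exact .sum fun a ha => .sum fun b hb =>
    columnNegligible_corr_lvl hr hs hcuts (hPh a ha) (hQ hb)

end LevelUnionCorrelation

section ReturnSums

variable {S : RankOne} {E F : Set ℝ} {N n : ℕ}

theorem measure_ne_top_of_subset_lvl_zero (hE : E ⊆ S.lvl 0 0) : S.μ E ≠ ⊤ :=
  measure_ne_top_of_subset hE (by rw [measure_lvl (S.h_pos 0)]; exact ENNReal.ofReal_ne_top)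

theorem measureReal_le_one (hE : E ⊆ S.lvl 0 0) : S.μ.real E ≤ 1 :=
  S.measureReal_lvl_zero ▸ measureReal_mono hE (measure_ne_top_of_subset_lvl_zero subset_rfl)

theorem corr_le_sum_corr_lvl_left (hE : E ⊆ S.lvl 0 0) (N k : ℕ) :
    S.corr E F k ≤ ∑ a ∈ S.desc 0 0 N, S.corr (S.lvl N a) F k := by
  calc S.corr E F k ≤ S.corr (S.lvl 0 0) F k :=
        measureReal_mono (inter_subset_inter_left _ hE)
          (measure_ne_top_of_subset_lvl_zero inter_subset_left)
    _ = S.corr (S.levelUnion N (S.desc 0 0 N)) F k :=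
        corr_congr_ae (S.lvl_zero_ae_eq_levelUnion_desc N) EventuallyEq.rfl k
    _ ≤ ∑ a ∈ S.desc 0 0 N, S.corr (S.lvl N a) F k := by
        rw [corr, levelUnion, iUnion₂_inter]
        exact measureReal_biUnion_finset_le _ _

theorem corr_le_sum_corr_lvl_right (hE : E ⊆ S.lvl 0 0) (hF : F ⊆ S.lvl 0 0) (N k : ℕ) :
    S.corr E F k ≤ ∑ b ∈ S.desc 0 0 N, S.corr E (S.lvl N b) k := by
  calc S.corr E F k ≤ S.corr E (S.lvl 0 0) k :=
        measureReal_mono (inter_subset_inter_right _ (image_mono hF))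
          (measure_ne_top_of_subset_lvl_zero (inter_subset_left.trans hE))
    _ = S.corr E (S.levelUnion N (S.desc 0 0 N)) k :=
        corr_congr_ae EventuallyEq.rfl (S.lvl_zero_ae_eq_levelUnion_desc N) k
    _ ≤ ∑ b ∈ S.desc 0 0 N, S.corr E (S.lvl N b) k := by
        rw [corr, levelUnion, image_iUnion₂, inter_iUnion₂]
        exact measureReal_biUnion_finset_le _ _

theorem sum_corr_lvl_right_le {b : ℕ} (hE : S.μ E ≠ ⊤) (hbn : b + n ≤ S.h N) :
    ∑ k ∈ Finset.range n, S.corr E (S.lvl N b) k ≤ S.μ.real E := by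
  refine sum_measureReal_inter_le hE
    (fun k _ => measurableSet_image_iterate measurableSet_lvl k) fun k hk l hl hkl => ?_
  have hk := Finset.mem_range.1 hk
  have hl := Finset.mem_range.1 hl
  rw [Function.onFun, image_iterate_lvl (by omega), image_iterate_lvl (by omega)]
  exact disjoint_lvl (by omega) (by omega) (by omega)

theorem disjoint_preimage_iterate_lvl {a k l : ℕ} (hkl : k < l) (hal : a + l < S.h N) :
    Disjoint (S.T^[k] ⁻¹' S.lvl N a) (S.T^[l] ⁻¹' S.lvl N a) := by
  refine disjoint_left.2 fun x hxk hxl => ?_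
  have hmem : S.T^[l] x ∈ S.lvl N (a + (l - k)) := by
    rw [← image_iterate_lvl (by omega), ← Nat.sub_add_cancel hkl.le, Function.iterate_add_apply,
      Nat.add_sub_cancel]
    exact mem_image_of_mem _ hxk
  have hdisj : Disjoint (S.lvl N a) (S.lvl N (a + (l - k))) :=
    disjoint_lvl (by omega) (by omega) (by omega)
  exact hdisj.notMem_of_mem_left hxl hmem

theorem corr_eq_measureReal_inter_preimage (hE : MeasurableSet E) (hF : MeasurableSet F) (k : ℕ) :
    S.corr E F k = S.μ.real (F ∩ S.T^[k] ⁻¹' E) := by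
  have hpres : MeasurePreserving S.T^[k] S.μ S.μ := MeasurePreserving.iterate S.Tpres k
  rw [corr, ← hpres.measureReal_preimage
    (hE.inter (measurableSet_image_iterate hF k)).nullMeasurableSet, preimage_inter,
    preimage_image_eq _ (S.T.injective.iterate k), inter_comm]

theorem sum_corr_lvl_left_le {a : ℕ} (hF : MeasurableSet F) (hFfin : S.μ F ≠ ⊤)
    (han : a + n ≤ S.h N) : ∑ k ∈ Finset.range n, S.corr (S.lvl N a) F k ≤ S.μ.real F := by
  simp only [corr_eq_measureReal_inter_preimage measurableSet_lvl hF]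
  refine sum_measureReal_inter_le hFfin
    (fun k _ => S.T.measurable.iterate k measurableSet_lvl) fun k hk l hl hkl => ?_
  have hk := Finset.mem_range.1 hk
  have hl := Finset.mem_range.1 hl
  rcases hkl.lt_or_gt with hkl | hlk
  · exact disjoint_preimage_iterate_lvl hkl (by omega)
  · exact (disjoint_preimage_iterate_lvl hlk (by omega)).symm

theorem card_desc_eq_inv_w (N : ℕ) : ((S.desc 0 0 N).card : ℝ) = (S.w N)⁻¹ :=
  eq_inv_of_mul_eq_one_left (S.card_desc_mul_w N)

theorem sum_corr_le_left (hE : E ⊆ S.lvl 0 0) (hF : F ⊆ S.lvl 0 0) (hn : n + S.M N ≤ S.h N) :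
    ∑ k ∈ Finset.range n, S.corr E F k ≤ S.μ.real E * (S.w N)⁻¹ := by
  calc ∑ k ∈ Finset.range n, S.corr E F k
      ≤ ∑ k ∈ Finset.range n, ∑ b ∈ S.desc 0 0 N, S.corr E (S.lvl N b) k :=
        Finset.sum_le_sum fun k _ => corr_le_sum_corr_lvl_right hE hF N k
    _ = ∑ b ∈ S.desc 0 0 N, ∑ k ∈ Finset.range n, S.corr E (S.lvl N b) k := Finset.sum_comm
    _ ≤ ∑ _b ∈ S.desc 0 0 N, S.μ.real E := Finset.sum_le_sum fun b hb =>
        sum_corr_lvl_right_le (measure_ne_top_of_subset_lvl_zero hE) (by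
          have := le_M_of_mem_desc hb
          omega)
    _ = S.μ.real E * (S.w N)⁻¹ := by
        rw [Finset.sum_const, nsmul_eq_mul, card_desc_eq_inv_w, mul_comm]

theorem sum_corr_le_right (hE : E ⊆ S.lvl 0 0) (hFm : MeasurableSet F) (hF : F ⊆ S.lvl 0 0)
    (hn : n + S.M N ≤ S.h N) :
    ∑ k ∈ Finset.range n, S.corr E F k ≤ S.μ.real F * (S.w N)⁻¹ := by
  calc ∑ k ∈ Finset.range n, S.corr E F k
      ≤ ∑ k ∈ Finset.range n, ∑ a ∈ S.desc 0 0 N, S.corr (S.lvl N a) F k :=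
        Finset.sum_le_sum fun k _ => corr_le_sum_corr_lvl_left hE N k
    _ = ∑ a ∈ S.desc 0 0 N, ∑ k ∈ Finset.range n, S.corr (S.lvl N a) F k := Finset.sum_comm
    _ ≤ ∑ _a ∈ S.desc 0 0 N, S.μ.real F := Finset.sum_le_sum fun a ha =>
        sum_corr_lvl_left_le hFm (measure_ne_top_of_subset_lvl_zero hF) (by
          have := le_M_of_mem_desc ha
          omega)
    _ = S.μ.real F * (S.w N)⁻¹ := by
        rw [Finset.sum_const, nsmul_eq_mul, card_desc_eq_inv_w, mul_comm]

theorem u_lvl_zero (k : ℕ) : S.u (S.lvl 0 0) k = S.corr (S.lvl 0 0) (S.lvl 0 0) k := by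
  rw [u, ← measureReal_def, ← measureReal_def, measureReal_lvl_zero, one_pow, div_one, corr]

theorem ite_le_sum_corr_lvl {a b : ℕ} (ha : a ∈ S.desc 0 0 N) (hn : S.M N < n) :
    (if b ≤ a then S.w N else 0) ≤ ∑ k ∈ Finset.range n, S.corr (S.lvl N a) (S.lvl N b) k := by
  split_ifs with hba
  · have haM := le_M_of_mem_desc ha
    have hah := lt_h_of_mem_desc ha
    calc S.w N = S.corr (S.lvl N a) (S.lvl N b) (a - b) := by
          rw [corr_lvl_of_add_lt hah (by omega), if_pos (by omega)]
      _ ≤ ∑ k ∈ Finset.range n, S.corr (S.lvl N a) (S.lvl N b) k :=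
          Finset.single_le_sum (f := S.corr (S.lvl N a) (S.lvl N b)) (fun k _ => corr_nonneg _ _ k)
            (Finset.mem_range.2 (by omega))
  · exact Finset.sum_nonneg fun k _ => corr_nonneg _ _ k

theorem inv_w_le_two_mul_a (hn : S.M N < n) : (S.w N)⁻¹ ≤ 2 * S.a (S.lvl 0 0) n := by
  set D := S.desc 0 0 N
  have hw := S.w_pos N
  have hsum : S.a (S.lvl 0 0) n =
      ∑ a ∈ D, ∑ b ∈ D, ∑ k ∈ Finset.range n, S.corr (S.lvl N a) (S.lvl N b) k := by
    simp only [RankOne.a, u_lvl_zero, corr_lvl_zero N]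
    rw [Finset.sum_comm]
    exact Finset.sum_congr rfl fun a _ => Finset.sum_comm
  have hlower : ∑ a ∈ D, ∑ b ∈ D, (if b ≤ a then S.w N else 0) ≤ S.a (S.lvl 0 0) n :=
    hsum ▸ Finset.sum_le_sum fun a ha => Finset.sum_le_sum fun b _ => ite_le_sum_corr_lvl ha hn
  have hswap : ∑ a ∈ D, ∑ b ∈ D, (if b ≤ a then S.w N else 0) =
      ∑ a ∈ D, ∑ b ∈ D, (if a ≤ b then S.w N else 0) := Finset.sum_comm
  calc (S.w N)⁻¹ = ∑ _a ∈ D, ∑ _b ∈ D, S.w N := by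
        rw [Finset.sum_const, Finset.sum_const, nsmul_eq_mul, nsmul_eq_mul, card_desc_mul_w,
          mul_one, card_desc_eq_inv_w]
    _ ≤ ∑ a ∈ D, ∑ b ∈ D, ((if b ≤ a then S.w N else 0) + if a ≤ b then S.w N else 0) := by
        refine Finset.sum_le_sum fun a _ => Finset.sum_le_sum fun b _ => ?_
        rcases le_total a b with hab | hba
        · rw [if_pos hab]
          exact le_add_of_nonneg_left (by positivity)
        · rw [if_pos hba]
          exact le_add_of_nonneg_right (by positivity)
    _ ≤ 2 * S.a (S.lvl 0 0) n := by
        simp only [Finset.sum_add_distrib, ← hswap]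
        linarith

end ReturnSums

section Scales

variable {S : RankOne}

theorem exists_column_of_time (hexp : S.ExpGrowing) {R : ℕ} (hR : ∀ n, S.r n ≤ R) {N₀ n : ℕ}
    (hn : S.h N₀ < n) :
    ∃ N ≥ N₀, n + S.M N ≤ S.h N ∧ (S.w N)⁻¹ ≤ 2 * R * S.a (S.lvl 0 0) n := by
  classical
  have hex : ∃ N, n + S.M N ≤ S.h N := by
    refine ⟨2 * n, ?_⟩
    have := S.strictMono_h.le_apply (x := 2 * n)
    have := hexp.two_mul_M_le (2 * n)
    omega
  have hspec : n + S.M (Nat.find hex) ≤ S.h (Nat.find hex) := Nat.find_spec hex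
  have hlt : N₀ < Nat.find hex := S.strictMono_h.lt_iff_lt.1 (by omega)
  obtain ⟨K, hK⟩ := Nat.exists_eq_add_of_lt hlt
  have hKn : S.M (N₀ + K) < n := by
    have := Nat.find_min hex (m := N₀ + K) (by omega)
    have := hexp.two_mul_M_le (N₀ + K)
    omega
  refine ⟨Nat.find hex, hlt.le, hspec, ?_⟩
  have hrR : (S.r (N₀ + K) : ℝ) ≤ R := by exact_mod_cast hR _
  have hw := S.w_pos (N₀ + K)
  calc (S.w (Nat.find hex))⁻¹ = S.r (N₀ + K) * (S.w (N₀ + K))⁻¹ := by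
        rw [hK, S.wrec, inv_div, div_eq_mul_inv]
    _ ≤ R * (2 * S.a (S.lvl 0 0) n) :=
        mul_le_mul hrR (inv_w_le_two_mul_a hKn) (by positivity) (by positivity)
    _ = 2 * R * S.a (S.lvl 0 0) n := by ring

theorem ColumnNegligible.tendsto_inv_a_mul_sum {f : ℕ → ℝ} (hf : S.ColumnNegligible f)
    (hexp : S.ExpGrowing) (hcuts : S.BoundedCuts) :
    Tendsto (fun n => (S.a (S.lvl 0 0) n)⁻¹ * ∑ k ∈ Finset.range n, |f k|) atTop (nhds 0) := by
  obtain ⟨R, hR⟩ := hcuts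
  have ha : ∀ n, 0 ≤ S.a (S.lvl 0 0) n := fun n =>
    Finset.sum_nonneg fun k _ => u_lvl_zero (S := S) k ▸ corr_nonneg _ _ k
  have hnonneg : ∀ n, 0 ≤ (S.a (S.lvl 0 0) n)⁻¹ * ∑ k ∈ Finset.range n, |f k| := fun n =>
    mul_nonneg (inv_nonneg.2 (ha n)) (Finset.sum_nonneg fun k _ => abs_nonneg _)
  refine tendsto_order.2 ⟨fun x hx => .of_forall fun n => hx.trans_le (hnonneg n), fun ε hε => ?_⟩
  obtain ⟨N₀, hN₀⟩ := eventually_atTop.1 (hf (ε / (2 * R + 1)) (by positivity))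
  filter_upwards [eventually_gt_atTop (S.h N₀)] with n hn
  obtain ⟨N, hN, hnN, hwN⟩ := exists_column_of_time hexp hR hn
  have hw := inv_pos.2 (S.w_pos N)
  have ha_pos : 0 < S.a (S.lvl 0 0) n := by
    refine (ha n).lt_of_ne fun h0 => ?_
    rw [← h0, mul_zero] at hwN
    linarith
  rw [inv_mul_lt_iff₀ ha_pos]
  calc ∑ k ∈ Finset.range n, |f k| ≤ ε / (2 * R + 1) * (S.w N)⁻¹ := hN₀ N hN n hnN
    _ ≤ ε / (2 * R + 1) * (2 * R * S.a (S.lvl 0 0) n) := by gcongr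
    _ < ε / (2 * R + 1) * ((2 * R + 1) * S.a (S.lvl 0 0) n) := by gcongr; linarith
    _ = S.a (S.lvl 0 0) n * ε := by field_simp

end Scales

section Approximation

variable {S : RankOne}

theorem lvl_subset_lvl_zero {N a : ℕ} (ha : a ∈ S.desc 0 0 N) : S.lvl N a ⊆ S.lvl 0 0 := by
  induction N generalizing a with
  | zero =>
    rw [desc, Finset.mem_singleton] at ha
    rw [ha]
  | succ N ih =>
    rw [desc_succ] at ha
    obtain ⟨b, hb, x, hx, rfl⟩ := Finset.mem_add.1 ha
    exact (lvl_succ_subset (lt_h_of_mem_desc hb) hx).trans (ih hb)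

theorem levelUnion_subset_lvl_zero {N : ℕ} {P : Finset ℕ} (hP : P ⊆ S.desc 0 0 N) :
    S.levelUnion N P ⊆ S.lvl 0 0 :=
  iUnion₂_subset fun _ ha => lvl_subset_lvl_zero (hP ha)

theorem lvl_subset_thickening {N a : ℕ} {K : Set ℝ} {δ : ℝ} (hw : S.w N < δ)
    (hK : (S.lvl N a ∩ K).Nonempty) : S.lvl N a ⊆ Metric.thickening δ K := by
  obtain ⟨y, hy, hyK⟩ := hK
  intro x hx
  refine Metric.mem_thickening_iff.2 ⟨y, hyK, ?_⟩
  rw [Real.dist_eq, abs_lt]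
  constructor <;> linarith [hx.1, hx.2, hy.1, hy.2]

theorem eventually_exists_levelUnion_between {K V : Set ℝ} (hK : IsCompact K) (hV : IsOpen V)
    (hKV : K ⊆ V) (hKI : K ⊆ S.lvl 0 0) :
    ∀ᶠ j in atTop, ∃ P ⊆ S.desc 0 0 j, K ≤ᵐ[S.μ] S.levelUnion j P ∧ S.levelUnion j P ⊆ V := by
  classical
  obtain ⟨δ, hδ, hδV⟩ := hK.exists_thickening_subset_open hV hKV
  filter_upwards [S.tendsto_w.eventually_lt_const hδ] with j hj
  refine ⟨(S.desc 0 0 j).filter fun a => (S.lvl j a ∩ K).Nonempty, Finset.filter_subset _ _, ?_, ?_⟩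
  · filter_upwards [(S.lvl_zero_ae_eq_levelUnion_desc j).le] with x hx hxK
    obtain ⟨a, ha, hxa⟩ := mem_iUnion₂.1 (hx (hKI hxK))
    exact mem_iUnion₂.2 ⟨a, Finset.mem_filter.2 ⟨ha, x, hxa, hxK⟩, hxa⟩
  · exact iUnion₂_subset fun a ha =>
      (lvl_subset_thickening hj (Finset.mem_filter.1 ha).2).trans hδV

theorem eventually_exists_measureReal_symmDiff_levelUnion_le {A : Set ℝ} (hA : MeasurableSet A)
    (hAI : A ⊆ S.lvl 0 0) {ε : ℝ} (hε : 0 < ε) :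
    ∀ᶠ j in atTop, ∃ P ⊆ S.desc 0 0 j, S.μ.real (symmDiff A (S.levelUnion j P)) ≤ ε := by
  have hfin : volume A ≠ ⊤ := measure_ne_top_of_subset hAI measure_Ioo_lt_top.ne
  have hε2 : ENNReal.ofReal (ε / 2) ≠ 0 := by simpa using hε
  obtain ⟨K, hKA, hK, hKε⟩ := hA.exists_isCompact_sdiff_lt hfin hε2
  obtain ⟨V, hAV, hV, -, hVε⟩ := hA.exists_isOpen_sdiff_lt hfin hε2
  filter_upwards [eventually_exists_levelUnion_between hK hV (hKA.trans hAV) (hKA.trans hAI)]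
    with j ⟨P, hP, hKP, hPV⟩
  refine ⟨P, hP, ENNReal.toReal_le_of_le_ofReal hε.le ?_⟩
  have hle : symmDiff A (S.levelUnion j P) ≤ᵐ[S.μ] (A \ K ∪ V \ A : Set ℝ) := by
    filter_upwards [hKP] with x hx hxA
    rcases hxA with ⟨hxA, hxP⟩ | ⟨hxP, hxA⟩
    · exact Or.inl ⟨hxA, fun hxK => hxP (hx hxK)⟩
    · exact Or.inr ⟨hPV hxP, hxA⟩
  calc S.μ (symmDiff A (S.levelUnion j P)) ≤ S.μ (A \ K ∪ V \ A) := measure_mono_ae hle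
    _ ≤ volume (A \ K ∪ V \ A) := Measure.restrict_le_self _
    _ ≤ volume (A \ K) + volume (V \ A) := measure_union_le _ _
    _ ≤ ENNReal.ofReal (ε / 2) + ENNReal.ofReal (ε / 2) := add_le_add hKε.le hVε.le
    _ = ENNReal.ofReal ε := by
      rw [← ENNReal.ofReal_add (by positivity) (by positivity), add_halves]

end Approximation

section Continuity

variable {S : RankOne} {A A' B B' : Set ℝ}

theorem abs_corr_sub_corr_left_le (hA : MeasurableSet A) (hAI : A ⊆ S.lvl 0 0)
    (hA' : MeasurableSet A') (hAI' : A' ⊆ S.lvl 0 0) (hB : MeasurableSet B) (k : ℕ) :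
    |S.corr A B k - S.corr A' B k| ≤ S.corr (symmDiff A A') B k := by
  have hTB := measurableSet_image_iterate (S := S) hB k
  rw [corr, corr, corr, inter_symmDiff_distrib_right]
  exact abs_measureReal_sub_le_measureReal_symmDiff' (hA.inter hTB).nullMeasurableSet
    (hA'.inter hTB).nullMeasurableSet
    (measure_ne_top_of_subset_lvl_zero (inter_subset_left.trans hAI))
    (measure_ne_top_of_subset_lvl_zero (inter_subset_left.trans hAI'))

theorem abs_corr_sub_corr_right_le (hA : MeasurableSet A) (hAI : A ⊆ S.lvl 0 0)
    (hB : MeasurableSet B) (hB' : MeasurableSet B') (k : ℕ) :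
    |S.corr A B k - S.corr A B' k| ≤ S.corr A (symmDiff B B') k := by
  have hfin : ∀ X, S.μ (A ∩ X) ≠ ⊤ := fun X =>
    measure_ne_top_of_subset_lvl_zero (inter_subset_left.trans hAI)
  rw [corr, corr, corr, image_symmDiff (S.T.injective.iterate k), inter_symmDiff_distrib_left]
  exact abs_measureReal_sub_le_measureReal_symmDiff'
    (hA.inter (measurableSet_image_iterate hB k)).nullMeasurableSet
    (hA.inter (measurableSet_image_iterate hB' k)).nullMeasurableSet (hfin _) (hfin _)

theorem abs_measureReal_mul_sub_le (hA : MeasurableSet A) (hAI : A ⊆ S.lvl 0 0)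
    (hA' : MeasurableSet A') (hAI' : A' ⊆ S.lvl 0 0) (hB : MeasurableSet B) (hBI : B ⊆ S.lvl 0 0)
    (hB' : MeasurableSet B') (hBI' : B' ⊆ S.lvl 0 0) :
    |S.μ.real A * S.μ.real B - S.μ.real A' * S.μ.real B'| ≤
      S.μ.real (symmDiff A A') + S.μ.real (symmDiff B B') := by
  have hdist : ∀ {E F : Set ℝ}, MeasurableSet E → E ⊆ S.lvl 0 0 → MeasurableSet F →
      F ⊆ S.lvl 0 0 → |S.μ.real E - S.μ.real F| ≤ S.μ.real (symmDiff E F) :=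
    fun hE hEI hF hFI => abs_measureReal_sub_le_measureReal_symmDiff' hE.nullMeasurableSet
      hF.nullMeasurableSet (measure_ne_top_of_subset_lvl_zero hEI)
      (measure_ne_top_of_subset_lvl_zero hFI)
  calc |S.μ.real A * S.μ.real B - S.μ.real A' * S.μ.real B'|
      = |(S.μ.real A - S.μ.real A') * S.μ.real B + S.μ.real A' * (S.μ.real B - S.μ.real B')| := by
        ring_nf
    _ ≤ |S.μ.real A - S.μ.real A'| * S.μ.real B + S.μ.real A' * |S.μ.real B - S.μ.real B'| := by
        refine (abs_add_le _ _).trans_eq ?_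
        rw [abs_mul, abs_mul, abs_of_nonneg measureReal_nonneg,
          abs_of_nonneg (measureReal_nonneg (s := A'))]
    _ ≤ |S.μ.real A - S.μ.real A'| + |S.μ.real B - S.μ.real B'| :=
        add_le_add (mul_le_of_le_one_right (abs_nonneg _) (measureReal_le_one hBI))
          (mul_le_of_le_one_left (abs_nonneg _) (measureReal_le_one hAI'))
    _ ≤ S.μ.real (symmDiff A A') + S.μ.real (symmDiff B B') :=
        add_le_add (hdist hA hAI hA' hAI') (hdist hB hBI hB' hBI')

theorem abs_mixingDefect_sub_le (hA : MeasurableSet A) (hAI : A ⊆ S.lvl 0 0)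
    (hA' : MeasurableSet A') (hAI' : A' ⊆ S.lvl 0 0) (hB : MeasurableSet B) (hBI : B ⊆ S.lvl 0 0)
    (hB' : MeasurableSet B') (hBI' : B' ⊆ S.lvl 0 0) (k : ℕ) :
    |S.mixingDefect A B k - S.mixingDefect A' B' k| ≤
      S.corr (symmDiff A A') B k + S.corr A' (symmDiff B B') k +
        (S.μ.real (symmDiff A A') + S.μ.real (symmDiff B B')) *
          S.corr (S.lvl 0 0) (S.lvl 0 0) k := by
  calc |S.mixingDefect A B k - S.mixingDefect A' B' k|
      = |(S.corr A B k - S.corr A' B k) + (S.corr A' B k - S.corr A' B' k) -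
          (S.μ.real A * S.μ.real B - S.μ.real A' * S.μ.real B') *
            S.corr (S.lvl 0 0) (S.lvl 0 0) k| := by
        rw [mixingDefect, mixingDefect]
        ring_nf
    _ ≤ |S.corr A B k - S.corr A' B k| + |S.corr A' B k - S.corr A' B' k| +
          |S.μ.real A * S.μ.real B - S.μ.real A' * S.μ.real B'| *
            S.corr (S.lvl 0 0) (S.lvl 0 0) k := by
        refine (abs_sub _ _).trans ?_
        rw [abs_mul, abs_of_nonneg (corr_nonneg (S.lvl 0 0) (S.lvl 0 0) k)]
        exact add_le_add_left (abs_add_le _ _) _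
    _ ≤ _ := add_le_add
        (add_le_add (abs_corr_sub_corr_left_le hA hAI hA' hAI' hB k)
          (abs_corr_sub_corr_right_le hA' hAI' hB hB' k))
        (mul_le_mul_of_nonneg_right
          (abs_measureReal_mul_sub_le hA hAI hA' hAI' hB hBI hB' hBI') (corr_nonneg _ _ k))

theorem sum_abs_mixingDefect_sub_le (hA : MeasurableSet A) (hAI : A ⊆ S.lvl 0 0)
    (hA' : MeasurableSet A') (hAI' : A' ⊆ S.lvl 0 0) (hB : MeasurableSet B) (hBI : B ⊆ S.lvl 0 0)
    (hB' : MeasurableSet B') (hBI' : B' ⊆ S.lvl 0 0) {N n : ℕ} (hn : n + S.M N ≤ S.h N) :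
    ∑ k ∈ Finset.range n, |S.mixingDefect A B k - S.mixingDefect A' B' k| ≤
      2 * (S.μ.real (symmDiff A A') + S.μ.real (symmDiff B B')) * (S.w N)⁻¹ := by
  have hAA' : symmDiff A A' ⊆ S.lvl 0 0 := symmDiff_subset_union.trans (union_subset hAI hAI')
  have hBB' : symmDiff B B' ⊆ S.lvl 0 0 := symmDiff_subset_union.trans (union_subset hBI hBI')
  set α := S.μ.real (symmDiff A A')
  set β := S.μ.real (symmDiff B B')
  calc ∑ k ∈ Finset.range n, |S.mixingDefect A B k - S.mixingDefect A' B' k|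
      ≤ ∑ k ∈ Finset.range n, (S.corr (symmDiff A A') B k + S.corr A' (symmDiff B B') k +
          (α + β) * S.corr (S.lvl 0 0) (S.lvl 0 0) k) := Finset.sum_le_sum fun k _ =>
        abs_mixingDefect_sub_le hA hAI hA' hAI' hB hBI hB' hBI' k
    _ ≤ α * (S.w N)⁻¹ + β * (S.w N)⁻¹ + (α + β) * (S.μ.real (S.lvl 0 0) * (S.w N)⁻¹) := by
        rw [Finset.sum_add_distrib, Finset.sum_add_distrib, ← Finset.mul_sum]
        gcongr
        · exact sum_corr_le_left hAA' hBI hn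
        · exact sum_corr_le_right hAI' (hB.symmDiff hB') hBB' hn
        · exact sum_corr_le_left subset_rfl subset_rfl hn
    _ = 2 * (α + β) * (S.w N)⁻¹ := by
        rw [measureReal_lvl_zero]
        ring

theorem columnNegligible_mixingDefect (hr : ∀ n, 3 ≤ S.r n) (hs : ∀ n, S.s n 1 = S.s n 0 + 1)
    (hcuts : S.BoundedCuts) (hA : MeasurableSet A) (hAI : A ⊆ S.lvl 0 0) (hB : MeasurableSet B)
    (hBI : B ⊆ S.lvl 0 0) : S.ColumnNegligible (S.mixingDefect A B) := by
  refine columnNegligible_of_forall_approx fun ε hε => ?_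
  have hε4 : 0 < ε / 4 := by positivity
  obtain ⟨j, ⟨P, hP, hAP⟩, Q, hQ, hBQ⟩ :=
    ((eventually_exists_measureReal_symmDiff_levelUnion_le hA hAI hε4).and
      (eventually_exists_measureReal_symmDiff_levelUnion_le hB hBI hε4)).exists
  refine ⟨S.mixingDefect (S.levelUnion j P) (S.levelUnion j Q),
    columnNegligible_mixingDefect_levelUnion hr hs hcuts hP hQ, fun N n hn => ?_⟩
  refine (sum_abs_mixingDefect_sub_le hA hAI measurableSet_levelUnion
    (levelUnion_subset_lvl_zero hP) hB hBI measurableSet_levelUnion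
    (levelUnion_subset_lvl_zero hQ) hn).trans ?_
  exact mul_le_mul_of_nonneg_right (by linarith) (inv_nonneg.2 (S.w_pos N).le)

end Continuity

theorem expGrowing_of_nine_mul_h_le {S : RankOne} (hr : ∀ n, S.r n = 3) (hs0 : ∀ n, S.s n 0 = 0)
    (hs1 : ∀ n, S.s n 1 = 1) (hh : ∀ n, 9 * S.h n ≤ S.h (n + 1)) : S.ExpGrowing := by
  intro n
  have hrec := S.hrec n
  rw [hr] at hrec
  simp only [Finset.sum_range_succ, Finset.sum_range_zero, hs0, hs1] at hrec
  have := hh n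
  have := S.h_pos n
  simp only [hr, Nat.reduceSub]
  omega

end RankOne

theorem statement18_general (S : RankOne) (hr : ∀ n, 3 ≤ S.r n)
    (hs : ∀ n, S.s n 1 = S.s n 0 + 1) (hexp : S.ExpGrowing) (hcuts : S.BoundedCuts) :
    S.RWMOn (S.lvl 0 0) := by
  refine ⟨RankOne.measurableSet_lvl, ?_,
    RankOne.measure_ne_top_of_subset_lvl_zero subset_rfl, fun A B hA hAI hB hBI => ?_⟩
  · rw [RankOne.measure_lvl (S.h_pos 0)]
    exact ENNReal.ofReal_pos.2 (S.w_pos 0)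
  · simp only [RankOne.u_lvl_zero]
    exact (RankOne.columnNegligible_mixingDefect hr hs hcuts hA hAI hB hBI).tendsto_inv_a_mul_sum
      hexp hcuts

/-- For any fixed integer `c ≥ 2`, the Chacón-like rank-one transformation
with `r n = 3`, `s n 0 = 0`, `s n 1 = 1` and `h (n+1) = 3^c * h n` is rationally weakly
mixing: with `F = I` the unit interval, for all measurable `A, B ⊆ I`,
`(1/a_n(I)) ∑_{k<n} |μ(A ∩ T^k B) - μ(A)μ(B) u_k(I)| → 0`. -/
theorem statement18 (c : ℕ) (hc : 2 ≤ c) (S : RankOne)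
    (hr : ∀ n, S.r n = 3) (hs0 : ∀ n, S.s n 0 = 0) (hs1 : ∀ n, S.s n 1 = 1)
    (hh : ∀ n, S.h (n + 1) = 3 ^ c * S.h n)
    (A B : Set ℝ) (hA : MeasurableSet A) (hAI : A ⊆ S.lvl 0 0)
    (hB : MeasurableSet B) (hBI : B ⊆ S.lvl 0 0) :
    Tendsto (fun n => (S.a (S.lvl 0 0) n)⁻¹ *
        ∑ k ∈ Finset.range n,
          |(S.μ (A ∩ (⇑S.T)^[k] '' B)).toReal -
            (S.μ A).toReal * (S.μ B).toReal * S.u (S.lvl 0 0) k|)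
      atTop (nhds 0) := by
  have hnine : ∀ n, 9 * S.h n ≤ S.h (n + 1) := fun n =>
    hh n ▸ Nat.mul_le_mul_right _ (Nat.pow_le_pow_right three_pos hc)
  exact (statement18_general S (fun n => (hr n).ge) (fun n => by rw [hs0, hs1])
    (RankOne.expGrowing_of_nine_mul_h_le hr hs0 hs1 hnine) ⟨3, fun n => (hr n).le⟩).2.2.2
      A B hA hAI hB hBI
end

section
/- The normalized total variation of the binomial coefficients tends to zero: lim_{n→∞} 2^{−n} ∑_{k=0}^{n−1} |C(n, k+1) − C(n, k)| = 0, where C(n, k) denotes the binomial coefficient n choose k. -/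
open MeasureTheory Filter Set Pointwise

/-!
By absorption and Pascal's rule, `(n + 1) * (C(n, k+1) - C(n, k)) = C(n+1, k+1) * (n + 1 - 2(k+1))`,
so up to the factor `n + 1` the total variation of row `n` is the mean absolute deviation of the
symmetric binomial distribution with `n + 1` trials. By Cauchy–Schwarz this is at most its standard
deviation, which is of order `√(n + 1)`; the normalized variation is therefore `O(1 / √n)`.
-/

theorem add_one_mul_choose_succ_sub_choose {R : Type*} [CommRing R] (n k : ℕ) :
    ((n + 1 : ℕ) : R) * (n.choose (k + 1) - n.choose k)
      = (n + 1).choose (k + 1) * ((n + 1 : ℕ) - 2 * (k + 1 : ℕ)) := by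
  have absorption : ((n + 1 : ℕ) : R) * n.choose k = (n + 1).choose (k + 1) * (k + 1 : ℕ) :=
    mod_cast congrArg (Nat.cast : ℕ → R) (Nat.add_one_mul_choose_eq n k)
  have pascal : ((n + 1).choose (k + 1) : R) = n.choose k + n.choose (k + 1) :=
    mod_cast congrArg (Nat.cast : ℕ → R) (Nat.choose_succ_succ n k)
  linear_combination -2 * absorption - ((n + 1 : ℕ) : R) * pascal

section SecondMoment

variable {K : Type*} [Field K] [NeZero (2 : K)]

theorem eval_inv_two_bernsteinPolynomial (n k : ℕ) :
    (bernsteinPolynomial K n k).eval 2⁻¹ = n.choose k / 2 ^ n := by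
  have one_sub_half : (1 - 2⁻¹ : K) = 2⁻¹ := by
    field_simp
    norm_num
  rcases lt_or_ge n k with hnk | hkn
  · simp [bernsteinPolynomial, Nat.choose_eq_zero_of_lt hnk]
  · simp only [bernsteinPolynomial, Polynomial.eval_mul, Polynomial.eval_pow, Polynomial.eval_sub,
      Polynomial.eval_natCast, Polynomial.eval_X, Polynomial.eval_one, one_sub_half]
    rw [mul_assoc, ← pow_add, Nat.add_sub_cancel' hkn, inv_pow, div_eq_mul_inv]

theorem sum_choose_mul_sub_two_mul_sq (n : ℕ) :
    ∑ k ∈ Finset.range (n + 1), (n.choose k : K) * (n - 2 * k) ^ 2 = 2 ^ n * (n : K) := by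
  have variance : ∑ k ∈ Finset.range (n + 1), (n * 2⁻¹ - k : K) ^ 2 * (n.choose k / 2 ^ n)
      = (n : K) * 2⁻¹ * (1 - 2⁻¹) := by
    simpa [Polynomial.eval_finsetSum, eval_inv_two_bernsteinPolynomial]
      using congrArg (Polynomial.eval (2⁻¹ : K)) (bernsteinPolynomial.variance K n)
  calc ∑ k ∈ Finset.range (n + 1), (n.choose k : K) * (n - 2 * k) ^ 2
      = 2 ^ n * 2 ^ 2 * ∑ k ∈ Finset.range (n + 1),
          (n * 2⁻¹ - k : K) ^ 2 * (n.choose k / 2 ^ n) := by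
        rw [Finset.mul_sum]
        refine Finset.sum_congr rfl fun k _ => ?_
        field_simp
    _ = 2 ^ n * (n : K) := by
        rw [variance]
        field_simp
        ring

end SecondMoment

theorem sum_choose_mul_abs_sub_two_mul_le (n : ℕ) :
    ∑ k ∈ Finset.range (n + 1), (n.choose k : ℝ) * |(n - 2 * k : ℝ)| ≤ 2 ^ n * √n := by
  have cauchy_schwarz :
      (∑ k ∈ Finset.range (n + 1), (n.choose k : ℝ) * |(n - 2 * k : ℝ)|) ^ 2
        ≤ (∑ k ∈ Finset.range (n + 1), (n.choose k : ℝ))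
          * ∑ k ∈ Finset.range (n + 1), (n.choose k : ℝ) * (n - 2 * k) ^ 2 := by
    refine Finset.sum_sq_le_sum_mul_sum_of_sq_le_mul _ (fun _ _ => by positivity)
      (fun _ _ => by positivity) fun k _ => ?_
    rw [mul_pow, sq_abs]
    exact le_of_eq (by ring)
  have sum_choose : ∑ k ∈ Finset.range (n + 1), (n.choose k : ℝ) = 2 ^ n :=
    mod_cast Nat.sum_range_choose n
  refine le_of_sq_le_sq ?_ (by positivity)
  calc _ ≤ (2 : ℝ) ^ n * (2 ^ n * n) := by
        rwa [sum_choose, sum_choose_mul_sub_two_mul_sq] at cauchy_schwarz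
    _ = (2 ^ n * √n) ^ 2 := by
        rw [mul_pow, Real.sq_sqrt n.cast_nonneg]
        ring

theorem add_one_mul_sum_abs_choose_succ_sub_choose_le (n : ℕ) :
    ((n + 1 : ℕ) : ℝ) * ∑ k ∈ Finset.range n, |(n.choose (k + 1) : ℝ) - n.choose k|
      ≤ ∑ k ∈ Finset.range (n + 1 + 1),
          ((n + 1).choose k : ℝ) * |((n + 1 : ℕ) - 2 * k : ℝ)| := by
  have abs_difference (k : ℕ) : ((n + 1 : ℕ) : ℝ) * |(n.choose (k + 1) : ℝ) - n.choose k|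
      = (n + 1).choose (k + 1) * |((n + 1 : ℕ) - 2 * (k + 1 : ℕ) : ℝ)| := by
    simpa only [abs_mul, Nat.abs_cast] using
      congrArg abs (add_one_mul_choose_succ_sub_choose (R := ℝ) n k)
  rw [Finset.mul_sum, Finset.sum_congr rfl fun k _ => abs_difference k,
    Finset.sum_range_succ', Finset.sum_range_succ, add_assoc]
  exact le_add_of_nonneg_right (by positivity)

theorem inv_two_pow_mul_sum_abs_choose_succ_sub_choose_le (n : ℕ) :
    ((2 : ℝ) ^ n)⁻¹ * ∑ k ∈ Finset.range n, |(n.choose (k + 1) : ℝ) - n.choose k|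
      ≤ 2 / √(n + 1 : ℕ) := by
  have sqrt_add_one_pos : 0 < √((n + 1 : ℕ) : ℝ) := by positivity
  have scaled_bound := (add_one_mul_sum_abs_choose_succ_sub_choose_le n).trans
    (sum_choose_mul_abs_sub_two_mul_le (n + 1))
  rw [inv_mul_le_iff₀ (by positivity), mul_div_assoc', le_div_iff₀ sqrt_add_one_pos, ← pow_succ]
  refine le_of_mul_le_mul_right ?_ sqrt_add_one_pos
  rwa [mul_assoc, Real.mul_self_sqrt (Nat.cast_nonneg _), mul_comm]

/-- The normalized total variation of the binomial coefficients tends to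
zero: `2⁻ⁿ ∑_{k<n} |C(n, k+1) - C(n, k)| → 0`. -/
theorem statement19 :
    Tendsto (fun n : ℕ => ((2 : ℝ) ^ n)⁻¹ *
        ∑ k ∈ Finset.range n, |((n.choose (k + 1) : ℝ)) - ((n.choose k : ℝ))|)
      atTop (nhds 0) := by
  have sqrt_tendsto : Tendsto (fun n : ℕ => √((n + 1 : ℕ) : ℝ)) atTop atTop :=
    Real.tendsto_sqrt_atTop.comp (tendsto_natCast_atTop_atTop.comp (tendsto_add_atTop_nat 1))
  exact squeeze_zero (fun n => by positivity) inv_two_pow_mul_sum_abs_choose_succ_sub_choose_le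
    (sqrt_tendsto.const_div_atTop 2)
end
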